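/- arXiv:1208.3692 — 3 statements merged into one kernel-verified Lean document; each statement's English description precedes it below -/
import Mathlib

section
/- Let f : ℂ → ℂ be a transcendental entire function. Then the set K(f) of points with bounded orbit is either connected or has infinitely many connected components (i.e. if K(f) is not connected, then the set of connected components of K(f) is infinite). -/
open Filter Topology

/-- The set `K(f)` of points whose orbit under iteration of `f` is bounded. -/
def boundedOrbitSet (f : ℂ → ℂ) : Set ℂ :=
  {z : ℂ | Bornology.IsBounded (Set.range fun n : ℕ => f^[n] z)}

/-- `f` is a transcendental entire function: holomorphic on all of `ℂ` and not a polynomial. -/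
def TranscendentalEntire (f : ℂ → ℂ) : Prop :=
  Differentiable ℂ f ∧ ¬∃ p : Polynomial ℂ, ∀ z, f z = p.eval z

theorem exists_log_on_ball {g : ℂ → ℂ} {c : ℂ} {r : ℝ} (hr : 0 < r)
    (hg : DifferentiableOn ℂ g (Metric.ball c r)) (h0 : ∀ z ∈ Metric.ball c r, g z ≠ 0) :
    ∃ G : ℂ → ℂ, DifferentiableOn ℂ G (Metric.ball c r) ∧
      (∀ z ∈ Metric.ball c r, Complex.exp (G z) = g z) ∧ G c = Complex.log (g c) := by
  have hd : DifferentiableOn ℂ (fun z => deriv g z / g z) (Metric.ball c r) :=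
    (hg.deriv Metric.isOpen_ball).div hg h0
  obtain ⟨G, hG⟩ := hd.isExactOn_ball
  have hc : c ∈ Metric.ball c r := Metric.mem_ball_self hr
  refine ⟨fun z => G z - G c + Complex.log (g c), ?_, ?_, by simp⟩
  · intro z hz
    exact (((hG z hz).differentiableAt.sub_const _).add_const _).differentiableWithinAt
  · have key : ∀ z ∈ Metric.ball c r,
        HasDerivAt (fun z => Complex.exp (-(G z - G c + Complex.log (g c))) * g z) 0 z := by
      intro z hz
      have h1 := (((hG z hz).sub_const (G c)).add_const (Complex.log (g c))).neg.cexp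
      have h2 := (hg.differentiableAt (Metric.isOpen_ball.mem_nhds hz)).hasDerivAt
      have h3 : HasDerivAt (fun z => Complex.exp (-(G z - G c + Complex.log (g c))) * g z) _ z :=
        h1.mul h2
      refine h3.congr_deriv ?_
      have := h0 z hz
      simp only [Pi.neg_apply]
      field_simp
      ring
    have hconst : ∀ z ∈ Metric.ball c r,
        Complex.exp (-(G z - G c + Complex.log (g c))) * g z = 1 := by
      intro z hz
      have := (convex_ball c r).is_const_of_fderivWithin_eq_zero (𝕜 := ℂ)
        (f := fun z => Complex.exp (-(G z - G c + Complex.log (g c))) * g z)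
        (fun w hw => (key w hw).differentiableAt.differentiableWithinAt)
        (fun w hw => by
          rw [fderivWithin_of_isOpen Metric.isOpen_ball hw]
          rw [(key w hw).hasFDerivAt.fderiv]; simp) hz hc
      refine this.trans ?_
      simp [Complex.exp_neg, Complex.exp_log (h0 c hc), h0 c hc]
    intro z hz
    have := hconst z hz
    rw [Complex.exp_neg] at this
    have he := Complex.exp_ne_zero (G z - G c + Complex.log (g c))
    field_simp at this
    exact this.symm

theorem bloch_deriv {H : ℂ → ℂ} {c : ℂ} {R L : ℝ} (hR : 0 < R)
    (hH : DifferentiableOn ℂ H (Metric.ball c R))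
    (hL : ∀ w : ℂ, ∃ v, dist v w ≤ L ∧ ∀ z ∈ Metric.ball c R, H z ≠ v) :
    R * ‖deriv H c‖ ≤ 48 * L := by
  have hd : DifferentiableOn ℂ (deriv H) (Metric.ball c R) := hH.deriv Metric.isOpen_ball
  have main : ∀ ρ, 0 < ρ → ρ < R → ρ * ‖deriv H c‖ ≤ 48 * L := by
    intro ρ hρ hρR
    have hsub : Metric.closedBall c ρ ⊆ Metric.ball c R := Metric.closedBall_subset_ball hρR
    obtain ⟨a, ha, hmax⟩ := (isCompact_closedBall c ρ).exists_isMaxOn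
      (f := fun z => (ρ - dist z c) * ‖deriv H z‖) ⟨c, by simp [hρ.le]⟩ 
      ((by fun_prop : Continuous fun z : ℂ => ρ - dist z c).continuousOn.mul
        (hd.continuousOn.mono hsub).norm)
    have hmc := hmax (show c ∈ Metric.closedBall c ρ by simp [hρ.le])
    simp only [dist_self, sub_zero, Set.mem_ofPred_eq] at hmc
    have hL0 : 0 ≤ L := by
      obtain ⟨v, hv, -⟩ := hL 0
      exact dist_nonneg.trans hv
    by_cases h0 : deriv H c = 0
    · simp [h0]; positivity
    have hpos : 0 < ρ * ‖deriv H c‖ := by positivity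
    have ha' : dist a c ≤ ρ := ha
    set A := ‖deriv H a‖ with hA
    have hA0 : 0 < A := by
      rcases (norm_nonneg (deriv H a)).lt_or_eq with h | h
      · exact h
      · rw [hA, ← h] at hmc; linarith
    have hs0 : 0 < ρ - dist a c := by
      by_contra hcon
      nlinarith
    set s := (ρ - dist a c) / 2 with hs
    have hs' : 0 < s := by positivity
    have hsb : Metric.ball a s ⊆ Metric.ball c ρ := by
      apply Metric.ball_subset_ball'; linarith
    have hbd : ∀ z ∈ Metric.ball a s, ‖deriv H z‖ ≤ 2 * A := by
      intro z hz
      have h1 := hmax (Metric.ball_subset_closedBall (hsb hz))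
      simp only [Set.mem_ofPred_eq] at h1
      have h2 : dist z c ≤ dist z a + dist a c := dist_triangle _ _ _
      have h3 : dist z a < s := hz
      have h4 : s ≤ ρ - dist z c := by linarith
      have h5 : s * ‖deriv H z‖ ≤ (2 * s) * A := by
        calc s * ‖deriv H z‖ ≤ (ρ - dist z c) * ‖deriv H z‖ := by gcongr
          _ ≤ _ := h1
          _ = _ := by rw [hs]; ring
      have : s * ‖deriv H z‖ ≤ s * (2 * A) := by linarith
      exact le_of_mul_le_mul_left this hs'
    have hsR : Metric.ball a s ⊆ Metric.ball c R :=
      hsb.trans (Metric.ball_subset_ball hρR.le)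
    have hschw : ∀ z ∈ Metric.ball a s, dist (deriv H z) (deriv H a) ≤ 3 * A / s * dist z a := by
      intro z hz
      refine Complex.dist_le_div_mul_dist_of_mapsTo_ball (hd.mono hsR) ?_ hz
      intro w hw
      rw [Metric.mem_closedBall, dist_eq_norm]
      linarith [norm_sub_le (deriv H w) (deriv H a), hbd w hw]
    have h6 : Metric.closedBall a (s / 6) ⊆ Metric.ball a s :=
      Metric.closedBall_subset_ball (by linarith)
    have hhalf : ∀ z ∈ Metric.closedBall a (s / 6), ‖deriv H z - deriv H a‖ ≤ A / 2 := by
      intro z hz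
      rw [← dist_eq_norm]
      refine (hschw z (h6 hz)).trans ?_
      have : dist z a ≤ s / 6 := hz
      calc 3 * A / s * dist z a ≤ 3 * A / s * (s / 6) := by gcongr
        _ = A / 2 := by field_simp; norm_num
    have hlin : ∀ z ∈ Metric.closedBall a (s / 6),
        ‖(H z - deriv H a * z) - (H a - deriv H a * a)‖ ≤ A / 2 * ‖z - a‖ := by
      intro z hz
      refine (convex_closedBall a (s / 6)).norm_image_sub_le_of_norm_hasDerivWithin_le
        (f := fun z => H z - deriv H a * z) (f' := fun z => deriv H z - deriv H a) 
        (fun w hw => ?_) hhalf (Metric.mem_closedBall_self (by positivity)) hz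
      have h1 := (hH.differentiableAt (Metric.isOpen_ball.mem_nhds (hsR (h6 hw)))).hasDerivAt
      have h2 := (hasDerivAt_id w).const_mul (deriv H a)
      have h3 : HasDerivAt (fun z => H z - deriv H a * z) _ w := h1.sub h2
      rw [mul_one] at h3
      exact h3.hasDerivWithinAt
    have hlow : ∀ z ∈ Metric.closedBall a (s / 6), A / 2 * ‖z - a‖ ≤ ‖H z - H a‖ := by
      intro z hz
      have h1 := hlin z hz
      have h2 : ‖deriv H a * (z - a)‖ ≤ ‖H z - H a‖ + 
          ‖(H z - deriv H a * z) - (H a - deriv H a * a)‖ := by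
        have h3 : deriv H a * (z - a) =
          (H z - H a) - ((H z - deriv H a * z) - (H a - deriv H a * a)) := by ring
        rw [h3]
        exact norm_sub_le _ _
      rw [norm_mul, ← hA] at h2
      linarith
    have hball : Metric.ball (H a) (A * s / 12 / 2) ⊆ H '' Metric.closedBall a (s / 6) := by
      apply DiffContOnCl.ball_subset_image_closedBall _ (by positivity)
      · intro z hz
        have h1 := hlow z (Metric.sphere_subset_closedBall hz)
        rw [mem_sphere_iff_norm] at hz
        rw [hz] at h1
        linarith
      · apply Filter.Eventually.frequently (f := 𝓝[≠] a) ?_ |>.filter_mono nhdsWithin_le_nhds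
        filter_upwards [self_mem_nhdsWithin, mem_nhdsWithin_of_mem_nhds
          (Metric.closedBall_mem_nhds a (show 0 < s / 6 by positivity))] with z hz hz'
        intro heq
        have h1 := hlow z hz'
        rw [heq, sub_self, norm_zero] at h1
        have : 0 < ‖z - a‖ := norm_pos_iff.2 (sub_ne_zero.2 hz)
        nlinarith [mul_pos hA0 this]
      · apply DifferentiableOn.diffContOnCl
        rw [closure_ball _ (by positivity)]
        exact hH.mono (h6.trans hsR)
    obtain ⟨v, hv, hv'⟩ := hL (H a)
    by_contra hcon
    push Not at hcon
    have : v ∈ Metric.ball (H a) (A * s / 12 / 2) := by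
      rw [Metric.mem_ball]
      nlinarith
    obtain ⟨z, hz, hzv⟩ := hball this
    exact hv' z (hsR (h6 hz)) hzv
  have : Tendsto (fun ρ : ℝ => ρ * ‖deriv H c‖) (𝓝[<] R) (𝓝 (R * ‖deriv H c‖)) :=
    ((continuous_id.mul continuous_const).tendsto R).mono_left nhdsWithin_le_nhds
  refine le_of_tendsto this ?_
  filter_upwards [Ioo_mem_nhdsLT hR] with ρ hρ using main ρ hρ.1 hρ.2

theorem bloch_dist {H : ℂ → ℂ} {c : ℂ} {R L : ℝ} (hR : 0 < R)
    (hH : DifferentiableOn ℂ H (Metric.ball c R))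
    (hL : ∀ w : ℂ, ∃ v, dist v w ≤ L ∧ ∀ z ∈ Metric.ball c R, H z ≠ v) :
    ∀ z ∈ Metric.closedBall c (R / 2), ‖H z - H c‖ ≤ 48 * L := by
  intro z hz
  have hsub : Metric.closedBall c (R / 2) ⊆ Metric.ball c R :=
    Metric.closedBall_subset_ball (by linarith)
  have hb : ∀ w ∈ Metric.closedBall c (R / 2), ‖deriv H w‖ ≤ 96 * L / R := by
    intro w hw
    have hs : Metric.ball w (R / 2) ⊆ Metric.ball c R := by
      apply Metric.ball_subset_ball'
      have : dist w c ≤ R / 2 := hw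
      linarith
    have := bloch_deriv (L := L) (by positivity) (hH.mono hs) (fun w => by
      obtain ⟨v, h1, h2⟩ := hL w
      exact ⟨v, h1, fun z hz => h2 z (hs hz)⟩)
    rw [le_div_iff₀ hR]
    linarith
  have := (convex_closedBall c (R / 2)).norm_image_sub_le_of_norm_deriv_le
    (fun w hw => hH.differentiableAt (Metric.isOpen_ball.mem_nhds (hsub hw))) hb
    (Metric.mem_closedBall_self (by positivity)) hz
  refine this.trans ?_
  have hz' : ‖z - c‖ ≤ R / 2 := by rw [← dist_eq_norm]; exact hz
  have hL0 : 0 ≤ L := by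
    obtain ⟨v, hv, -⟩ := hL 0
    exact dist_nonneg.trans hv
  calc 96 * L / R * ‖z - c‖ ≤ 96 * L / R * (R / 2) := by gcongr
    _ = 48 * L := by field_simp; ring

theorem net_real (x : ℝ) : ∃ y : ℝ, |y - x| ≤ 1 ∧ ∃ n : ℤ, Real.cosh y ^ 2 = n := by
  have pos : ∀ x : ℝ, 0 ≤ x → ∃ y : ℝ, |y - x| ≤ 1 ∧ ∃ n : ℤ, Real.cosh y ^ 2 = n := by
    intro x hx
    have h1 : Real.cosh x ^ 2 + 1 ≤ Real.cosh (x + 1) ^ 2 := by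
      have h2 : Real.cosh x * Real.cosh 1 ≤ Real.cosh (x + 1) := by
        rw [Real.cosh_add]
        have := mul_nonneg (Real.sinh_nonneg_iff.2 hx) (Real.sinh_nonneg_iff.2 zero_le_one)
        linarith
      have h3 : 1 ≤ Real.sinh 1 := Real.self_le_sinh_iff.2 zero_le_one
      have h4 := Real.cosh_sq 1
      have h5 := Real.one_le_cosh x
      have h6 : (Real.cosh x * Real.cosh 1) ^ 2 ≤ Real.cosh (x + 1) ^ 2 := by
        have := Real.cosh_pos 1
        gcongr
      have h7 : 2 ≤ Real.cosh 1 ^ 2 := by nlinarith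
      have h8 : 1 ≤ Real.cosh x ^ 2 := by nlinarith
      rw [mul_pow] at h6
      nlinarith
    have := intermediate_value_Icc (f := fun t => Real.cosh t ^ 2) (show x ≤ x + 1 by linarith)
      (by fun_prop)
    obtain ⟨y, hy, hy'⟩ := this (show ((⌈Real.cosh x ^ 2⌉ : ℤ) : ℝ) ∈ _ from
      ⟨Int.le_ceil _, (Int.ceil_lt_add_one _).le.trans h1⟩)
    exact ⟨y, by rw [abs_le]; constructor <;> linarith [hy.1, hy.2], _, hy'⟩
  rcases le_total 0 x with h | h
  · exact pos x h
  · obtain ⟨y, h1, n, hn⟩ := pos (-x) (by linarith)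
    refine ⟨-y, ?_, n, by simpa using hn⟩
    rw [← abs_neg]; convert h1 using 2; ring

theorem net_complex (w : ℂ) : ∃ v : ℂ, dist v w ≤ 3 ∧ ∃ n : ℤ, Complex.cosh v ^ 2 = n := by
  obtain ⟨y, hy, n, hn⟩ := net_real w.re
  set k := round (w.im / Real.pi) with hk
  have hπ := Real.pi_pos
  have h2 : |k * Real.pi - w.im| ≤ 2 := by
    have := abs_sub_round (w.im / Real.pi)
    rw [← hk] at this
    have h3 : k * Real.pi - w.im = -((w.im / Real.pi - k) * Real.pi) := by field_simp; ring
    rw [h3, abs_neg, abs_mul, abs_of_pos hπ]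
    nlinarith [Real.pi_le_four]
  refine ⟨y + (k * Real.pi : ℝ) * Complex.I, ?_, n, ?_⟩
  · rw [dist_eq_norm]
    refine (Complex.norm_le_abs_re_add_abs_im _).trans ?_
    simp only [Complex.sub_re, Complex.add_re, Complex.sub_im, Complex.add_im, Complex.mul_re,
      Complex.mul_im, Complex.ofReal_re, Complex.ofReal_im, Complex.I_re, Complex.I_im]
    simp only [mul_zero, mul_one, sub_zero, zero_mul, add_zero, zero_add]
    linarith
  · rw [Complex.cosh_add, Complex.cosh_mul_I, Complex.sinh_mul_I]
    have hs : Complex.sin ((k * Real.pi : ℝ) : ℂ) = 0 := by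
      rw [← Complex.ofReal_sin, Real.sin_int_mul_pi]; simp
    have hc : Complex.cos ((k * Real.pi : ℝ) : ℂ) ^ 2 = 1 := by
      have := Complex.sin_sq_add_cos_sq ((k * Real.pi : ℝ) : ℂ)
      rw [hs] at this; simpa using this
    rw [hs, zero_mul, mul_zero, add_zero, mul_pow, hc, mul_one, ← Complex.ofReal_cosh]
    exact_mod_cast hn

theorem schottky_aux (M : ℝ) : ∃ C : ℝ, ∀ (g : ℂ → ℂ) (c : ℂ) (r : ℝ), 0 < r →
    DifferentiableOn ℂ g (Metric.ball c r) → (∀ z ∈ Metric.ball c r, g z ≠ 0 ∧ g z ≠ 1) →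
    1 / 2 ≤ ‖g c‖ → ‖g c‖ ≤ M → ∀ z ∈ Metric.closedBall c (r / 2), ‖g z‖ ≤ C := by
  set D : ℝ := M + 1 + Real.pi with hD
  refine ⟨Real.exp (2 * Real.pi * ((D + 2) * Real.exp 144) ^ 2), ?_⟩
  intro g c r hr hg h01 hlow hup z hz
  have hπ := Real.pi_pos
  have hπ3 := Real.pi_gt_three
  have hc : c ∈ Metric.ball c r := Metric.mem_ball_self hr
  have hzb : z ∈ Metric.ball c r := Metric.closedBall_subset_ball (by linarith) hz
  obtain ⟨G, hGd, hGe, hGc⟩ := exists_log_on_ball hr hg (fun z hz => (h01 z hz).1)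
  have hpi : (2 * Real.pi * Complex.I : ℂ) ≠ 0 := Complex.two_pi_I_ne_zero
  set F : ℂ → ℂ := fun z => G z / (2 * Real.pi * Complex.I) with hF
  have hFd : DifferentiableOn ℂ F (Metric.ball c r) := hGd.div_const _
  have hFG : ∀ z, G z = F z * (2 * Real.pi * Complex.I) := fun z => by
    simp only [hF]; field_simp
  have hFn : ∀ z ∈ Metric.ball c r, ∀ n : ℤ, F z ≠ n := by
    intro z hz n hn
    apply (h01 z hz).2
    rw [← hGe z hz, hFG z, hn, Complex.exp_int_mul_two_pi_mul_I]
  obtain ⟨P, hPd, hPe, -⟩ := exists_log_on_ball hr hFd (fun z hz => by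
    simpa using hFn z hz 0)
  obtain ⟨Q, hQd, hQe, -⟩ := exists_log_on_ball hr (hFd.sub_const 1) (fun z hz => by
    simpa [sub_eq_zero] using hFn z hz 1)
  set u : ℂ → ℂ := fun z => Complex.exp (P z / 2) with hu
  set v : ℂ → ℂ := fun z => Complex.exp (Q z / 2) with hv
  have hu2 : ∀ z ∈ Metric.ball c r, u z ^ 2 = F z := fun z hz => by
    rw [← hPe z hz, hu, ← Complex.exp_nat_mul]; congr 1; push_cast; ring
  have hv2 : ∀ z ∈ Metric.ball c r, v z ^ 2 = F z - 1 := fun z hz => by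
    rw [← hQe z hz, hv, ← Complex.exp_nat_mul]; congr 1; push_cast; ring
  have huv : ∀ z ∈ Metric.ball c r, (u z + v z) * (u z - v z) = 1 := fun z hz => by
    have h1 := hu2 z hz
    have h2 := hv2 z hz
    linear_combination h1 - h2
  have hud : DifferentiableOn ℂ u (Metric.ball c r) := (hPd.div_const 2).cexp
  have hvd : DifferentiableOn ℂ v (Metric.ball c r) := (hQd.div_const 2).cexp
  obtain ⟨H, hHd, hHe, -⟩ := exists_log_on_ball hr (hud.add hvd) (fun z hz =>
    left_ne_zero_of_mul_eq_one (huv z hz))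
  have hHe1 : ∀ z ∈ Metric.ball c r, Complex.exp (H z) = u z + v z := fun z hz => hHe z hz
  have hHe2 : ∀ z ∈ Metric.ball c r, Complex.exp (-H z) = u z - v z := fun z hz => by
    rw [Complex.exp_neg, hHe1 z hz]
    exact inv_eq_of_mul_eq_one_right (huv z hz)
  have hcosh : ∀ z ∈ Metric.ball c r, Complex.cosh (H z) = u z := fun z hz => by
    rw [Complex.cosh, hHe1 z hz, hHe2 z hz]; ring
  have hbl := bloch_dist (L := 3) hr hHd (fun w => by
    obtain ⟨y, hy, n, hn⟩ := net_complex w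
    refine ⟨y, hy, fun z hz h => hFn z hz n ?_⟩
    rw [← hu2 z hz, ← hcosh z hz, h, hn]) z hz
  -- bound at the centre
  have hGcb : ‖G c‖ ≤ D := by
    rw [hGc]
    refine (Complex.norm_le_abs_re_add_abs_im _).trans ?_
    rw [Complex.log_re, Complex.log_im]
    have h1 := Complex.abs_arg_le_pi (g c)
    have hgp : 0 < ‖g c‖ := by linarith
    have h2 := Real.log_le_sub_one_of_pos hgp
    have h3 := Real.one_sub_inv_le_log_of_pos hgp
    have h4 : ‖g c‖⁻¹ ≤ 2 := by
      rw [inv_le_comm₀ hgp (by norm_num)]; linarith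
    have h5 : |Real.log ‖g c‖| ≤ M + 1 := by
      rw [abs_le]; constructor <;> linarith
    linarith
  have hFc : ‖F c‖ ≤ D := by
    have h1 : ‖G c‖ = ‖F c‖ * (2 * Real.pi) := by
      rw [hFG c]; simp [abs_of_pos hπ]
    nlinarith [norm_nonneg (F c)]
  have hD0 : 0 ≤ D := (norm_nonneg _).trans hFc
  have huc : ‖u c‖ ^ 2 ≤ D := by rw [← norm_pow, hu2 c hc]; exact hFc
  have hvc : ‖v c‖ ^ 2 ≤ D + 1 := by
    rw [← norm_pow, hv2 c hc]
    refine (norm_sub_le _ _).trans ?_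
    simpa using hFc
  have hsum : ‖u c‖ + ‖v c‖ ≤ D + 2 := by
    nlinarith [sq_nonneg (‖u c‖ - 1), sq_nonneg (‖v c‖ - 1)]
  have he1 : ‖Complex.exp (H c)‖ ≤ D + 2 := by
    rw [hHe1 c hc]; exact (norm_add_le _ _).trans hsum
  have he2 : ‖Complex.exp (-H c)‖ ≤ D + 2 := by
    rw [hHe2 c hc]; exact (norm_sub_le _ _).trans hsum
  have hE : ∀ x : ℂ, ‖x‖ ≤ 144 → ‖Complex.exp x‖ ≤ Real.exp 144 := fun x hx =>
    (Complex.norm_exp_le_exp_norm x).trans (Real.exp_le_exp.2 hx)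
  have hz1 : ‖Complex.exp (H z)‖ ≤ (D + 2) * Real.exp 144 := by
    rw [show H z = H c + (H z - H c) by ring, Complex.exp_add, norm_mul]
    gcongr
    exact hE _ (by linarith)
  have hz2 : ‖Complex.exp (-H z)‖ ≤ (D + 2) * Real.exp 144 := by
    rw [show -H z = -H c + -(H z - H c) by ring, Complex.exp_add, norm_mul]
    gcongr
    exact hE _ (by rw [norm_neg]; linarith)
  have huz : ‖u z‖ ≤ (D + 2) * Real.exp 144 := by
    rw [← hcosh z hzb, Complex.cosh, norm_div]
    have := norm_add_le (Complex.exp (H z)) (Complex.exp (-H z))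
    simp only [Complex.norm_ofNat]
    linarith
  rw [← hGe z hzb]
  refine (Complex.norm_exp_le_exp_norm _).trans (Real.exp_le_exp.2 ?_)
  rw [hFG z, ← hu2 z hzb]
  have : ‖u z ^ 2 * (2 * Real.pi * Complex.I)‖ = 2 * Real.pi * ‖u z‖ ^ 2 := by
    simp [abs_of_pos hπ]; ring
  rw [this]
  gcongr

/-- Schottky's theorem, in a uniform form. -/
theorem schottky (M δ : ℝ) (hδ : 0 < δ) : ∃ C : ℝ, ∀ (g : ℂ → ℂ) (c : ℂ) (r : ℝ) (a b : ℂ), 0 < r →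
    DifferentiableOn ℂ g (Metric.ball c r) → ‖a‖ ≤ M → ‖b‖ ≤ M → δ ≤ ‖b - a‖ →
    (∀ z ∈ Metric.ball c r, g z ≠ a ∧ g z ≠ b) →
    ‖g c‖ ≤ M → ∀ z ∈ Metric.closedBall c (r / 2), ‖g z‖ ≤ C := by
  obtain ⟨C, hC⟩ := schottky_aux (2 * M / δ)
  refine ⟨2 * M * C + M, ?_⟩
  have main : ∀ (g : ℂ → ℂ) (c : ℂ) (r : ℝ) (a b : ℂ), 0 < r →
      DifferentiableOn ℂ g (Metric.ball c r) → ‖a‖ ≤ M → ‖b‖ ≤ M → δ ≤ ‖b - a‖ →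
      (∀ z ∈ Metric.ball c r, g z ≠ a ∧ g z ≠ b) →
      ‖g c‖ ≤ M → ‖b - a‖ / 2 ≤ ‖g c - a‖ → 
      ∀ z ∈ Metric.closedBall c (r / 2), ‖g z‖ ≤ 2 * M * C + M := by
    intro g c r a b hr hg ha hb hab hom hgc hhalf z hz
    have hpos : 0 < ‖b - a‖ := hδ.trans_le hab
    have hba : b - a ≠ 0 := norm_pos_iff.1 hpos
    have h2M : ‖b - a‖ ≤ 2 * M := (norm_sub_le _ _).trans (by linarith)
    have := hC (fun z => (g z - a) / (b - a)) c r hr ((hg.sub_const a).div_const _) (by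
      intro z hz
      refine ⟨div_ne_zero (sub_ne_zero.2 (hom z hz).1) hba, ?_⟩
      rw [Ne, div_eq_one_iff_eq hba]
      intro h
      exact (hom z hz).2 (sub_left_injective h)) (by
      rw [norm_div, div_le_div_iff₀ (by norm_num) hpos]; linarith) (by
      rw [norm_div]
      have : ‖g c - a‖ ≤ 2 * M := (norm_sub_le _ _).trans (by linarith)
      have hM : 0 ≤ 2 * M := (norm_nonneg _).trans this
      gcongr) z hz
    rw [norm_div, div_le_iff₀ hpos] at this
    have hC0 : 0 ≤ C := by
      by_contra hcon
      push Not at hcon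
      nlinarith [norm_nonneg (g z - a)]
    have h3 : ‖g z‖ ≤ ‖g z - a‖ + ‖a‖ := by simpa using norm_add_le (g z - a) a
    nlinarith
  intro g c r a b hr hg ha hb hab hom hgc
  have htri : ‖b - a‖ ≤ ‖g c - a‖ + ‖g c - b‖ := by
    have := norm_sub_le (g c - a) (g c - b)
    simpa using this
  rcases le_total (‖b - a‖ / 2) ‖g c - a‖ with h | h
  · exact main g c r a b hr hg ha hb hab hom hgc h
  · refine main g c r b a hr hg hb ha (by rwa [norm_sub_rev]) (fun z hz => (hom z hz).symm) hgc ?_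
    rw [norm_sub_rev a b]; linarith

theorem little_picard {g : ℂ → ℂ} (hg : Differentiable ℂ g) {a b : ℂ} (hab : a ≠ b)
    (ha : ∀ z, g z ≠ a) (hb : ∀ z, g z ≠ b) : ∃ c, ∀ z, g z = c := by
  have hpos : 0 < ‖b - a‖ := norm_pos_iff.2 (sub_ne_zero.2 hab.symm)
  obtain ⟨C, hC⟩ := schottky (max (‖g 0‖) (max ‖a‖ ‖b‖)) (‖b - a‖) hpos
  refine hg.exists_const_forall_eq_of_bounded ?_
  rw [isBounded_iff_forall_norm_le]
  refine ⟨C, ?_⟩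
  rintro _ ⟨z, rfl⟩
  refine hC g 0 (2 * (‖z‖ + 1)) a b (by positivity) hg.differentiableOn (by simp) (by simp) le_rfl
    (fun z _ => ⟨ha z, hb z⟩) (by simp) z (by simp)

theorem mem_bos_iff {f : ℂ → ℂ} {z : ℂ} :
    z ∈ boundedOrbitSet f ↔ ∃ C : ℝ, ∀ n : ℕ, ‖f^[n] z‖ ≤ C := by
  unfold boundedOrbitSet
  rw [Set.mem_ofPred_eq, isBounded_iff_forall_norm_le]
  simp

theorem bos_apply_iff {f : ℂ → ℂ} {z : ℂ} :
    f z ∈ boundedOrbitSet f ↔ z ∈ boundedOrbitSet f := by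
  simp only [mem_bos_iff]
  constructor
  · rintro ⟨C, hC⟩
    refine ⟨max C ‖z‖, fun n => ?_⟩
    cases n with
    | zero => simp
    | succ n => exact (hC n).trans (le_max_left _ _)
  · rintro ⟨C, hC⟩
    exact ⟨C, fun n => hC (n + 1)⟩

theorem bos_iterate_iff {f : ℂ → ℂ} {z : ℂ} (n : ℕ) :
    f^[n] z ∈ boundedOrbitSet f ↔ z ∈ boundedOrbitSet f := by
  induction n with
  | zero => simp
  | succ n ih => rw [Function.iterate_succ_apply', bos_apply_iff, ih]

/-- Points near which the iterates are uniformly bounded. -/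
def unifBdd (f : ℂ → ℂ) : Set ℂ :=
  {z | ∃ r > 0, ∃ C : ℝ, ∀ n : ℕ, ∀ w ∈ Metric.ball z r, ‖f^[n] w‖ ≤ C}

theorem mem_unifBdd_iff {f : ℂ → ℂ} {z : ℂ} : z ∈ unifBdd f ↔
    ∃ r > 0, ∃ C : ℝ, ∀ n : ℕ, ∀ w ∈ Metric.ball z r, ‖f^[n] w‖ ≤ C := Iff.rfl

theorem bos_mem_nhds_of_unifBdd {f : ℂ → ℂ} {z : ℂ} (h : z ∈ unifBdd f) :
    boundedOrbitSet f ∈ 𝓝 z := by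
  obtain ⟨r, hr, C, hC⟩ := h
  filter_upwards [Metric.ball_mem_nhds z hr] with w hw
  exact mem_bos_iff.2 ⟨C, fun n => hC n w hw⟩

theorem unifBdd_of_apply {f : ℂ → ℂ} (hf : Continuous f) {z : ℂ} (h : f z ∈ unifBdd f) :
    z ∈ unifBdd f := by
  obtain ⟨r, hr, C, hC⟩ := h
  obtain ⟨s, hs, hs'⟩ := Metric.continuousAt_iff.1 hf.continuousAt r hr
  refine ⟨s, hs, max C (‖z‖ + s), fun n w hw => ?_⟩
  cases n with
  | zero =>
    refine le_trans ?_ (le_max_right _ _)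
    have : dist w z < s := hw
    rw [dist_eq_norm] at this
    have h2 : ‖w‖ ≤ ‖w - z‖ + ‖z‖ := by simpa using norm_add_le (w - z) z
    simp only [Function.iterate_zero, id_eq]
    linarith
  | succ n => exact (hC n (f w) (hs' hw)).trans (le_max_left _ _)

theorem bounded_first_iterates {f : ℂ → ℂ} (hf : Continuous f) (N : ℕ) (C : ℝ) :
    ∃ C' : ℝ, ∀ r < N, ∀ w, ‖w‖ ≤ C → ‖f^[r] w‖ ≤ C' := by
  have : ∀ r : ℕ, ∃ C' : ℝ, ∀ w, ‖w‖ ≤ C → ‖f^[r] w‖ ≤ C' := by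
    intro r
    obtain ⟨C', hC'⟩ := (isCompact_closedBall (0 : ℂ) C).exists_bound_of_continuousOn
      (hf.iterate r).continuousOn
    exact ⟨C', fun w hw => hC' w (by simpa using hw)⟩
  choose C' hC' using this
  refine ⟨∑ r ∈ Finset.range N, |C' r|, fun r hr w hw => ?_⟩
  exact (hC' r w hw).trans ((le_abs_self _).trans
    (Finset.single_le_sum (f := fun r => |C' r|) (fun i _ => abs_nonneg _) (Finset.mem_range.2 hr)))

theorem bounded_of_iterate {f : ℂ → ℂ} (hf : Continuous f) {N : ℕ} (hN : 0 < N) (C : ℝ) :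
    ∃ C' : ℝ, ∀ w, (∀ n, ‖(f^[N])^[n] w‖ ≤ C) → ∀ n, ‖f^[n] w‖ ≤ C' := by
  obtain ⟨C', hC'⟩ := bounded_first_iterates hf N C
  refine ⟨C', fun w hw n => ?_⟩
  have : f^[n] w = f^[n % N] ((f^[N])^[n / N] w) := by
    rw [← Function.iterate_mul, ← Function.iterate_add_apply, Nat.mod_add_div]
  rw [this]
  exact hC' _ (Nat.mod_lt _ hN) _ (hw _)

theorem bos_iterate {f : ℂ → ℂ} (hf : Continuous f) {N : ℕ} (hN : 0 < N) :
    boundedOrbitSet (f^[N]) = boundedOrbitSet f := by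
  ext z
  simp only [mem_bos_iff]
  constructor
  · rintro ⟨C, hC⟩
    obtain ⟨C', hC'⟩ := bounded_of_iterate hf hN C
    exact ⟨C', hC' z hC⟩
  · rintro ⟨C, hC⟩
    exact ⟨C, fun n => by rw [← Function.iterate_mul]; exact hC _⟩

theorem unifBdd_iterate {f : ℂ → ℂ} (hf : Continuous f) {N : ℕ} (hN : 0 < N) {z : ℂ}
    (h : z ∈ unifBdd (f^[N])) : z ∈ unifBdd f := by
  obtain ⟨r, hr, C, hC⟩ := h
  obtain ⟨C', hC'⟩ := bounded_of_iterate hf hN C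
  exact ⟨r, hr, C', fun n w hw => hC' w (fun n => hC n w hw) n⟩

theorem bos_nonempty {f : ℂ → ℂ} (hf : TranscendentalEntire f) : (boundedOrbitSet f).Nonempty := by
  obtain ⟨hd, hp⟩ := hf
  by_contra hne
  rw [Set.not_nonempty_iff_eq_empty] at hne
  have hnot : ∀ z, z ∉ boundedOrbitSet f := by simp [hne]
  have h1 : ∀ z, f z ≠ z := by
    intro z hz
    apply hnot z
    rw [mem_bos_iff]
    refine ⟨‖z‖, fun n => ?_⟩
    rw [Function.iterate_fixed hz]
  have h2 : ∀ z, f (f z) ≠ z := by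
    intro z hz
    apply hnot z
    rw [← bos_iterate hd.continuous two_pos, mem_bos_iff]
    refine ⟨‖z‖, fun n => ?_⟩
    rw [Function.iterate_fixed (show f^[2] z = z from hz)]
  have h1' : ∀ z, f z - z ≠ 0 := fun z => sub_ne_zero.2 (h1 z)
  obtain ⟨c, hc⟩ := little_picard (g := fun z => (f (f z) - z) / (f z - z))
    (((hd.comp hd).sub differentiable_id).div (hd.sub differentiable_id) h1') zero_ne_one
    (fun z => div_ne_zero (sub_ne_zero.2 (h2 z)) (h1' z))
    (fun z h => by
      rw [div_eq_one_iff_eq (h1' z)] at h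
      exact h1 (f z) (sub_left_injective h))
  have hcx0 : c ≠ 0 := by
    rw [← hc 0]; exact div_ne_zero (sub_ne_zero.2 (h2 0)) (h1' 0)
  have hc1 : c ≠ 1 := by
    intro h
    have := hc 0
    rw [h, div_eq_one_iff_eq (h1' 0)] at this
    exact h1 (f 0) (sub_left_injective this)
  have heq : ∀ z, f (f z) = c * (f z - z) + z := by
    intro z
    have := hc z
    rw [div_eq_iff (h1' z)] at this
    linear_combination this
  have hder : ∀ z, deriv f z * (deriv f (f z) - c) = 1 - c := by
    intro z
    have e1 : HasDerivAt (fun z => f (f z)) (deriv f (f z) * deriv f z) z :=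
      (hd (f z)).hasDerivAt.comp z (hd z).hasDerivAt
    have e2 : HasDerivAt (fun z => c * (f z - z) + z) (c * (deriv f z - 1) + 1) z :=
      (((hd z).hasDerivAt.sub (hasDerivAt_id z)).const_mul c).add (hasDerivAt_id z)
    rw [← funext heq] at e2
    have := e1.unique e2
    linear_combination this
  have hcne : (1 - c) ≠ 0 := sub_ne_zero.2 hc1.symm
  have hd0 : ∀ z, deriv f z ≠ 0 := fun z => left_ne_zero_of_mul (by rw [hder z]; exact hcne)
  have hdc : ∀ z, deriv f (f z) - c ≠ 0 := fun z =>
    right_ne_zero_of_mul (by rw [hder z]; exact hcne)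
  have hdd : Differentiable ℂ (deriv f) := fun z =>
    (hd.analyticAt z).deriv.differentiableAt
  have hconst : ∃ d, ∀ z, deriv f z = d := by
    obtain ⟨d, hd'⟩ := little_picard (hdd.comp hd) (Ne.symm hcx0) (fun z => hd0 (f z))
      (fun z => sub_ne_zero.1 (hdc z))
    refine ⟨(1 - c) / (d - c), fun z => ?_⟩
    have h3 := hder z
    have h4 := hd' z
    simp only [Function.comp_apply] at h4
    rw [h4] at h3
    have h5 := hdc z
    rw [h4] at h5
    rw [eq_div_iff h5, h3]
  obtain ⟨d, hd'⟩ := hconst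
  apply hp
  refine ⟨Polynomial.C d * Polynomial.X + Polynomial.C (f 0), fun z => ?_⟩
  have h6 : ∀ z, HasDerivAt (fun z => f z - d * z) 0 z := by
    intro z
    have : HasDerivAt (fun z => f z - d * z) (deriv f z - d * 1) z :=
      (hd z).hasDerivAt.sub ((hasDerivAt_id z).const_mul d)
    rwa [hd' z, mul_one, sub_self] at this
  have := is_const_of_deriv_eq_zero (fun z => (h6 z).differentiableAt) (fun z => (h6 z).deriv) z 0
  simp only [mul_zero, sub_zero] at this
  simp only [Polynomial.eval_add, Polynomial.eval_mul, Polynomial.eval_C, Polynomial.eval_X]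
  linear_combination this

theorem cover_aux {f : ℂ → ℂ} (hf : Differentiable ℂ f) {q q1 q2 : ℂ} {ρ : ℝ} (hρ : 0 < ρ)
    (hq : q ∈ closure (boundedOrbitSet f)) (hqK : q ∉ boundedOrbitSet f)
    (h12 : dist q1 q2 = 4 * ρ) :
    ∃ n > 0, Metric.closedBall q1 ρ ⊆ f^[n] '' Metric.closedBall q ρ ∨
      Metric.closedBall q2 ρ ⊆ f^[n] '' Metric.closedBall q ρ := by
  by_contra! hcon
  obtain ⟨z, hzK, hz⟩ := Metric.mem_closure_iff.1 hq (ρ / 3) (by positivity)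
  obtain ⟨C0, hC0⟩ := mem_bos_iff.1 hzK
  obtain ⟨C, hC⟩ := schottky (max C0 (max (‖q1‖ + ρ) (‖q2‖ + ρ))) (2 * ρ) (by positivity)
  apply hqK
  rw [mem_bos_iff]
  refine ⟨max C ‖q‖, fun n => ?_⟩
  rcases Nat.eq_zero_or_pos n with rfl | hn
  · simp
  refine le_trans ?_ (le_max_left _ _)
  obtain ⟨h1, h2⟩ := hcon n hn
  obtain ⟨a, ha, ha'⟩ := Set.not_subset.1 h1
  obtain ⟨b, hb, hb'⟩ := Set.not_subset.1 h2
  have hnorm : ∀ x y : ℂ, y ∈ Metric.closedBall x ρ → ‖y‖ ≤ ‖x‖ + ρ := by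
    intro x y hy
    rw [mem_closedBall_iff_norm] at hy
    have : ‖y‖ ≤ ‖y - x‖ + ‖x‖ := by simpa using norm_add_le (y - x) x
    linarith
  have hsub : Metric.ball z (2 * ρ / 3) ⊆ Metric.closedBall q ρ := by
    intro w hw
    rw [Metric.mem_closedBall]
    have h3 := dist_triangle w z q
    have h4 : dist w z < 2 * ρ / 3 := hw
    rw [dist_comm z q] at h3
    linarith
  refine hC (f^[n]) z (2 * ρ / 3) a b (by positivity) (hf.iterate n).differentiableOn ?_ ?_ ?_ ?_ ?_ q ?_
  · exact (hnorm _ _ ha).trans ((le_max_left _ _).trans (le_max_right _ _))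
  · exact (hnorm _ _ hb).trans ((le_max_right _ _).trans (le_max_right _ _))
  · rw [← dist_eq_norm]
    have h3 := dist_triangle4 q1 a b q2
    rw [dist_comm q1 a, dist_comm a b] at h3
    rw [Metric.mem_closedBall] at ha hb
    linarith
  · intro w hw
    exact ⟨fun h => ha' ⟨w, hsub hw, h⟩, fun h => hb' ⟨w, hsub hw, h⟩⟩
  · exact (hC0 n).trans (le_max_left _ _)
  · rw [Metric.mem_closedBall]; linarith

theorem no_self_cover {f : ℂ → ℂ} (hf : Continuous f) (hK : IsOpen (boundedOrbitSet f)) {q : ℂ}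
    {ρ : ℝ} (hρ : 0 < ρ) (hq : q ∉ boundedOrbitSet f) {N : ℕ} (hN : 0 < N)
    (h : Metric.closedBall q ρ ⊆ f^[N] '' Metric.closedBall q ρ) : False := by
  set S := Metric.closedBall q ρ ∩ (boundedOrbitSet f)ᶜ with hS
  have hSc : IsCompact S := (isCompact_closedBall q ρ).inter_right hK.isClosed_compl
  have hcov : ∀ s ∈ S, ∃ s' ∈ S, f^[N] s' = s := by
    rintro s ⟨hs1, hs2⟩
    obtain ⟨s', hs', rfl⟩ := h hs1
    exact ⟨s', ⟨hs', fun hc => hs2 ((bos_iterate_iff N).2 hc)⟩, rfl⟩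
  set t : ℕ → Set ℂ := fun k => {z | ∀ j ≤ k, (f^[N])^[j] z ∈ S} with ht
  have hne : ∀ k, ∀ s ∈ S, ∃ z ∈ t k, (f^[N])^[k] z = s := by
    intro k
    induction k with
    | zero => 
      intro s hs
      refine ⟨s, ?_, rfl⟩
      intro j hj
      obtain rfl : j = 0 := by omega
      exact hs
    | succ k ih =>
      intro s hs
      obtain ⟨s', hs', hss⟩ := hcov s hs
      obtain ⟨z, hz, hzs⟩ := ih s' hs'
      have hz' : (f^[N])^[k + 1] z = s := by rw [Function.iterate_succ_apply', hzs, hss]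
      refine ⟨z, ?_, hz'⟩
      intro j hj
      rcases Nat.lt_or_ge k j with h | h
      · obtain rfl : j = k + 1 := by omega
        rw [hz']; exact hs
      · exact hz j h
  have hqS : q ∈ S := ⟨Metric.mem_closedBall_self hρ.le, hq⟩
  have hclosed : ∀ k, IsClosed (t k) := by
    intro k
    have : t k = ⋂ j, ⋂ (_ : j ≤ k), (f^[N])^[j] ⁻¹' S := by ext; simp [ht]
    rw [this]
    exact isClosed_iInter fun j => isClosed_iInter fun _ =>
      hSc.isClosed.preimage ((hf.iterate N).iterate j)
  obtain ⟨x, hx⟩ := IsCompact.nonempty_iInter_of_sequence_nonempty_isCompact_isClosed t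
    (fun i z hz j hj => hz j (by omega)) (fun i => by
      obtain ⟨z, hz, -⟩ := hne i q hqS
      exact ⟨z, hz⟩) (hSc.of_isClosed_subset (hclosed 0) fun z hz => hz 0 le_rfl) hclosed
  rw [Set.mem_iInter] at hx
  have hxS : ∀ j, (f^[N])^[j] x ∈ S := fun j => hx j j le_rfl
  have hxK : x ∈ boundedOrbitSet f := by
    rw [← bos_iterate hf hN, mem_bos_iff]
    obtain ⟨C, hC⟩ := isBounded_iff_forall_norm_le.1 hSc.isBounded
    exact ⟨C, fun n => hC _ (hxS n)⟩
  exact (hxS 0).2 hxK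

theorem exists_not_unifBdd {f : ℂ → ℂ} (hf : Differentiable ℂ f)
    (hne : (boundedOrbitSet f).Nonempty) (hu : boundedOrbitSet f ≠ Set.univ) :
    ∃ p ∈ boundedOrbitSet f, p ∉ unifBdd f := by
  by_contra! hcon
  have hopen : IsOpen (boundedOrbitSet f) := isOpen_iff_mem_nhds.2 fun p hp =>
    bos_mem_nhds_of_unifBdd (hcon p hp)
  obtain ⟨q, hq⟩ := (nonempty_frontier_iff (s := boundedOrbitSet f)).2 ⟨hne, hu⟩
  rw [hopen.frontier_eq] at hq
  obtain ⟨hqc, hqK⟩ := hq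
  have hq2K : f q ∉ boundedOrbitSet f := fun h => hqK (bos_apply_iff.1 h)
  have hq2c : f q ∈ closure (boundedOrbitSet f) :=
    map_mem_closure hf.continuous hqc fun z hz => bos_apply_iff.2 hz
  have hneq : q ≠ f q := by
    intro h
    apply hqK
    rw [mem_bos_iff]
    refine ⟨‖q‖, fun n => ?_⟩
    rw [Function.iterate_fixed h.symm]
  set ρ := dist q (f q) / 4 with hρdef
  have hρ : 0 < ρ := by have := dist_pos.2 hneq; positivity
  have h12 : dist q (f q) = 4 * ρ := by rw [hρdef]; ring
  obtain ⟨n1, hn1, h1⟩ := cover_aux hf hρ hqc hqK h12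
  obtain ⟨n2, hn2, h2⟩ := cover_aux hf hρ hq2c hq2K h12
  rcases h1 with h1 | h1
  · exact no_self_cover hf.continuous hopen hρ hqK hn1 h1
  rcases h2 with h2 | h2
  · refine no_self_cover hf.continuous hopen hρ hqK (N := n2 + n1) (by omega) ?_
    rw [Function.iterate_add, Set.image_comp]
    exact h2.trans (Set.image_mono h1)
  · exact no_self_cover hf.continuous hopen hρ hq2K hn2 h2

theorem no_isolated {f : ℂ → ℂ} (hf : Differentiable ℂ f) {e a b : ℂ} {r : ℝ} (hr : 0 < r)
    (he : e ∈ boundedOrbitSet f) (ha : a ∈ boundedOrbitSet f) (hb : b ∈ boundedOrbitSet f)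
    (hab : a ≠ b) (hiso : ∀ z ∈ Metric.ball e r, z ∈ boundedOrbitSet f → z = e) : False := by
  obtain ⟨R0, hR0⟩ := mem_bos_iff.1 he
  set R1 := max ‖a‖ ‖b‖ with hR1
  have haR : ‖a‖ ≤ R1 := le_max_left _ _
  have hbR : ‖b‖ ≤ R1 := le_max_right _ _
  have hR00 : 0 ≤ R0 := (norm_nonneg _).trans (hR0 0)
  have hR10 : 0 ≤ R1 := (norm_nonneg _).trans haR
  set R := R0 + 2 * R1 + 1 with hR
  have hpos : 0 < ‖b - a‖ := norm_pos_iff.2 (sub_ne_zero.2 hab.symm)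
  obtain ⟨C, hC⟩ := schottky R ‖b - a‖ hpos
  set ρ := r * Real.exp (-14) with hρdef
  have hρ : 0 < ρ := by positivity
  have hρr : ρ < r := by
    have : Real.exp (-14) < 1 := by
      rw [← Real.exp_zero]; exact Real.exp_lt_exp.2 (by norm_num)
    rw [hρdef]; nlinarith
  have hnot : e ∉ unifBdd f := by
    intro h
    have h1 := bos_mem_nhds_of_unifBdd h
    have h2 : ({e} : Set ℂ) ∈ 𝓝 e := by
      filter_upwards [h1, Metric.ball_mem_nhds e hr] with z hz hz'
      exact hiso z hz' hz
    have h3 := isOpen_singleton_iff_nhds_eq_pure e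
    have : (𝓝[≠] e).NeBot := inferInstance
    have h4 : ({e}ᶜ ∩ {e} : Set ℂ) ∈ 𝓝[≠] e :=
      Filter.inter_mem self_mem_nhdsWithin (mem_nhdsWithin_of_mem_nhds h2)
    simp at h4
  have hex : ∃ n, ∃ w ∈ Metric.ball e ρ, C < ‖f^[n] w‖ := by
    by_contra! hcon
    exact hnot ⟨ρ, hρ, C, hcon⟩
  obtain ⟨n, w, hw, hwC⟩ := hex
  have hfn : Differentiable ℂ (f^[n]) := hf.iterate n
  have hom : ∀ z ∈ Metric.ball e r, z ≠ e → f^[n] z ≠ a ∧ f^[n] z ≠ b := by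
    intro z hz hze
    constructor
    · intro h
      exact hze (hiso z hz ((bos_iterate_iff n).1 (h ▸ ha)))
    · intro h
      exact hze (hiso z hz ((bos_iterate_iff n).1 (h ▸ hb)))
  have hbig : ∀ z ∈ Metric.sphere e ρ, R < ‖f^[n] z‖ := by
    by_contra! hcon
    obtain ⟨z0, hz0, hz0R⟩ := hcon
    have hz0n : ‖z0 - e‖ = ρ := by rwa [mem_sphere_iff_norm] at hz0
    have hz0e : z0 - e ≠ 0 := norm_pos_iff.1 (by rw [hz0n]; exact hρ)
    have hcirc : ∀ z ∈ Metric.sphere e ρ, ‖f^[n] z‖ ≤ C := by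
      intro z hz
      have hzn : ‖z - e‖ = ρ := by rwa [mem_sphere_iff_norm] at hz
      have hze : z - e ≠ 0 := norm_pos_iff.1 (by rw [hzn]; exact hρ)
      have := hC (fun x => f^[n] (e + Complex.exp x)) (Complex.log (z0 - e)) 14 a b (by norm_num)
        (hfn.comp (Complex.differentiable_exp.const_add e)).differentiableOn (by linarith) (by linarith) le_rfl
        (fun x hx => by
          apply hom
          · rw [mem_ball_iff_norm, add_sub_cancel_left, Complex.norm_exp]
            rw [mem_ball_iff_norm] at hx
            have h1 := (Complex.abs_re_le_norm _).trans_lt hx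
            rw [Complex.sub_re, Complex.log_re, hz0n] at h1
            have h2 := (abs_lt.1 h1).2
            have h3 : Real.log ρ = Real.log r + -14 := by
              rw [hρdef, Real.log_mul hr.ne' (Real.exp_pos _).ne', Real.log_exp]
            calc Real.exp x.re < Real.exp (Real.log r) := Real.exp_lt_exp.2 (by linarith)
              _ = r := Real.exp_log hr
          · intro h
            exact Complex.exp_ne_zero x (by simp at h)) (by
          simp only [Complex.exp_log hz0e, add_sub_cancel]; exact hz0R)
        (Complex.log (z - e)) (by
          rw [mem_closedBall_iff_norm]
          refine (Complex.norm_le_abs_re_add_abs_im _).trans ?_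
          rw [Complex.sub_re, Complex.sub_im, Complex.log_re, Complex.log_re, hz0n, hzn,
            Complex.log_im, Complex.log_im, sub_self, abs_zero, zero_add]
          have h1 := Complex.abs_arg_le_pi (z - e)
          have h2 := Complex.abs_arg_le_pi (z0 - e)
          have h3 := abs_sub (Complex.arg (z - e)) (Complex.arg (z0 - e))
          have h4 := Real.pi_lt_d2
          linarith)
      simpa only [Complex.exp_log hze, add_sub_cancel] using this
    have := Complex.norm_le_of_forall_mem_frontier_norm_le (U := Metric.ball e ρ)
      Metric.isBounded_ball (hfn.diffContOnCl) (C := C) (by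
        rw [frontier_ball _ hρ.ne']; exact hcirc) (subset_closure hw)
    linarith
  have hhit : ∀ x : ℂ, ‖x‖ ≤ R1 → x ∈ boundedOrbitSet f → f^[n] e = x := by
    intro x hx hxK
    by_contra hne
    have hnz : ∀ z ∈ Metric.closedBall e ρ, f^[n] z - x ≠ 0 := by
      intro z hz h
      have h1 : f^[n] z = x := sub_eq_zero.1 h
      have h2 : z = e := hiso z (Metric.closedBall_subset_ball hρr hz)
        ((bos_iterate_iff n).1 (h1 ▸ hxK))
      exact hne (h2 ▸ h1)
    have hφ : DiffContOnCl ℂ (fun z => (f^[n] z - x)⁻¹) (Metric.ball e ρ) := by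
      apply DifferentiableOn.diffContOnCl
      rw [closure_ball _ hρ.ne']
      exact (hfn.sub_const x).differentiableOn.inv hnz
    have h3 := Complex.norm_le_of_forall_mem_frontier_norm_le (U := Metric.ball e ρ)
      Metric.isBounded_ball hφ (C := (R0 + R1 + 1)⁻¹) (by
        rw [frontier_ball _ hρ.ne']
        intro z hz
        rw [norm_inv]
        have h4 := hbig z hz
        have h5 : ‖f^[n] z‖ ≤ ‖f^[n] z - x‖ + ‖x‖ := by
          simpa using norm_add_le (f^[n] z - x) x
        have h6 : R0 + R1 + 1 ≤ ‖f^[n] z - x‖ := by linarith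
        gcongr) (subset_closure (Metric.mem_ball_self hρ))
    rw [norm_inv] at h3
    have h7 := (inv_le_inv₀ (norm_pos_iff.2 (hnz e (Metric.mem_closedBall_self hρ.le)))
      (by positivity)).1 h3
    have h8 := norm_sub_le (f^[n] e) x
    have h9 := hR0 n
    linarith
  exact hab ((hhit a haR ha).symm.trans (hhit b hbR hb))

theorem blow_up {f : ℂ → ℂ} (hf : Differentiable ℂ f) {p a b : ℂ} (hp : p ∈ boundedOrbitSet f)
    (hpu : p ∉ unifBdd f) (hab : a ≠ b) {r : ℝ} (hr : 0 < r) :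
    ∃ n, ∃ z ∈ Metric.ball p r, f^[n] z = a ∨ f^[n] z = b := by
  by_contra! hcon
  have hpos : 0 < ‖b - a‖ := norm_pos_iff.2 (sub_ne_zero.2 hab.symm)
  obtain ⟨C0, hC0⟩ := mem_bos_iff.1 hp
  obtain ⟨C, hC⟩ := schottky (max C0 (max ‖a‖ ‖b‖)) ‖b - a‖ hpos
  apply hpu
  refine ⟨r / 2, by positivity, C, fun n w hw => ?_⟩
  exact hC (f^[n]) p r a b hr (hf.iterate n).differentiableOn (by simp) (by simp) le_rfl
    (hcon n) ((hC0 n).trans (le_max_left _ _)) w (Metric.ball_subset_closedBall hw)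

theorem exists_idem_iterate {T : Type*} [Finite T] (σ : T → T) :
    ∃ N > 0, ∀ x, σ^[N] (σ^[N] x) = σ^[N] x := by
  obtain ⟨a, b, hab, h⟩ := Finite.exists_ne_map_eq_of_infinite (fun n : ℕ => σ^[n])
  have main : ∀ a b : ℕ, a < b → σ^[a] = σ^[b] → ∃ N > 0, ∀ x, σ^[N] (σ^[N] x) = σ^[N] x := by
    intro a b hab h
    obtain ⟨d, rfl⟩ := Nat.exists_eq_add_of_lt hab
    have h1 : ∀ m, a ≤ m → σ^[m + (d + 1)] = σ^[m] := by
      intro m hm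
      obtain ⟨k, rfl⟩ := Nat.exists_eq_add_of_le hm
      rw [show a + k + (d + 1) = k + (a + d + 1) by ring, add_comm a k, Function.iterate_add σ k (a + d + 1),
        Function.iterate_add σ k a, h]
    have h2 : ∀ j m, a ≤ m → σ^[m + j * (d + 1)] = σ^[m] := by
      intro j
      induction j with
      | zero => intro m _; simp
      | succ j ih =>
        intro m hm
        rw [show m + (j + 1) * (d + 1) = (m + j * (d + 1)) + (d + 1) by ring,
          h1 _ (by omega), ih m hm]
    refine ⟨(a + 1) * (d + 1), by positivity, fun x => ?_⟩
    rw [← Function.iterate_add_apply, h2]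
    nlinarith
  rcases lt_or_gt_of_ne hab with h' | h'
  · exact main a b h' h
  · exact main b a h' h.symm

theorem Kf_connected_or_infinitely_many_components (f : ℂ → ℂ)
    (hf : TranscendentalEntire f) :
    IsConnected (boundedOrbitSet f) ∨
      {C : Set ℂ | ∃ z ∈ boundedOrbitSet f,
        C = connectedComponentIn (boundedOrbitSet f) z}.Infinite := by
  have hne := bos_nonempty hf
  have hd := hf.1
  have hcont := hd.continuous
  by_cases hu : boundedOrbitSet f = Set.univ
  · left; rw [hu]; exact isConnected_univ
  by_contra! hcon
  obtain ⟨hnc, hinf⟩ := hcon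
  have hnpc : ¬ IsPreconnected (boundedOrbitSet f) := fun h => hnc ⟨hne, h⟩
  have hfinT : Finite (ConnectedComponents (boundedOrbitSet f)) := by
    have := hinf.to_subtype
    let φ : ConnectedComponents (boundedOrbitSet f) → {C : Set ℂ | ∃ z ∈ boundedOrbitSet f,
        C = connectedComponentIn (boundedOrbitSet f) z} :=
      fun t => ⟨connectedComponentIn (boundedOrbitSet f) (Quotient.out t).1,
        (Quotient.out t).1, (Quotient.out t).2, rfl⟩
    apply Finite.of_injective φ
    intro s t hst
    have h1 : connectedComponentIn (boundedOrbitSet f) (Quotient.out s).1 =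
      connectedComponentIn (boundedOrbitSet f) (Quotient.out t).1 := congrArg Subtype.val hst
    rw [connectedComponentIn_eq_image (Quotient.out s).2,
      connectedComponentIn_eq_image (Quotient.out t).2] at h1
    have h2 := Subtype.val_injective.image_injective h1
    have h3 := ConnectedComponents.coe_eq_coe.2 h2
    have h4 : ∀ t : ConnectedComponents (boundedOrbitSet f),
      ((Quotient.out t : boundedOrbitSet f) : ConnectedComponents (boundedOrbitSet f)) = t :=
        fun t => Quotient.out_eq t
    rwa [h4, h4] at h3
  -- the components are open in `K(f)`
  have hopen : ∀ x : boundedOrbitSet f, ∃ r > 0, ∀ y : boundedOrbitSet f,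
      y.1 ∈ Metric.ball x.1 r → (y : ConnectedComponents (boundedOrbitSet f)) = x := by
    intro x
    have h1 : IsOpen ((fun y : boundedOrbitSet f => (y : ConnectedComponents (boundedOrbitSet f)))
        ⁻¹' {(x : ConnectedComponents (boundedOrbitSet f))}) :=
      (isOpen_discrete _).preimage ConnectedComponents.continuous_coe
    obtain ⟨r, hr, h2⟩ := Metric.isOpen_iff.1 h1 x rfl
    exact ⟨r, hr, fun y hy => h2 hy⟩
  -- the set has two points
  obtain ⟨a0, ha0, b0, hb0, hab0⟩ : (boundedOrbitSet f).Nontrivial := by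
    by_contra h
    exact hnpc (Set.not_nontrivial_iff.1 h).isPreconnected
  -- so every component has two points
  have htwo : ∀ x : boundedOrbitSet f, ∃ y : boundedOrbitSet f, y ≠ x ∧
      (y : ConnectedComponents (boundedOrbitSet f)) = x := by
    intro x
    by_contra! h
    obtain ⟨r, hr, hx⟩ := hopen x
    refine no_isolated hd hr x.2 ha0 hb0 hab0 fun z hz hzK => ?_
    by_contra hzx
    exact h ⟨z, hzK⟩ (fun h' => hzx (congrArg Subtype.val h')) (hx ⟨z, hzK⟩ hz)
  -- induced map on components
  let F : boundedOrbitSet f → boundedOrbitSet f := fun x => ⟨f x.1, bos_apply_iff.2 x.2⟩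
  have hF : Continuous F := (hcont.comp continuous_subtype_val).subtype_mk _
  have hFn : ∀ n x, (F^[n] x).1 = f^[n] x.1 := by
    intro n
    induction n with
    | zero => intro x; rfl
    | succ n ih => intro x; rw [Function.iterate_succ_apply, ih, Function.iterate_succ_apply]
  let σ := hF.connectedComponentsMap
  have hσ : ∀ n (x : boundedOrbitSet f), σ^[n] (x : ConnectedComponents (boundedOrbitSet f)) =
      ((F^[n] x : boundedOrbitSet f) : ConnectedComponents (boundedOrbitSet f)) := by
    intro n
    induction n with
    | zero => intro x; rfl
    | succ n ih => intro x; rw [Function.iterate_succ_apply, Function.iterate_succ_apply, ← ih]; rfl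
  obtain ⟨N, hN, hid⟩ := exists_idem_iterate σ
  obtain ⟨p0, hp0, hp0u⟩ := exists_not_unifBdd hd hne hu
  set p : boundedOrbitSet f := F^[N] ⟨p0, hp0⟩ with hp
  have hpu : p.1 ∉ unifBdd f := by
    have : ∀ n, f^[n] p0 ∉ unifBdd f := by
      intro n
      induction n with
      | zero => exact hp0u
      | succ n ih =>
        rw [Function.iterate_succ_apply']
        exact fun h => ih (unifBdd_of_apply hcont h)
    rw [hp, hFn]; exact this N
  have hpN : p.1 ∉ unifBdd (f^[N]) := fun h => hpu (unifBdd_iterate hcont hN h)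
  have hpfix : σ^[N] (p : ConnectedComponents (boundedOrbitSet f)) = p := by
    rw [hp, ← hσ, hid]
  have hpfix' : ∀ n, σ^[N * n] (p : ConnectedComponents (boundedOrbitSet f)) = p := by
    intro n
    rw [Function.iterate_mul]
    exact Function.iterate_fixed hpfix n
  obtain ⟨r, hr, hpr⟩ := hopen p
  have hall : ∀ x : boundedOrbitSet f, (x : ConnectedComponents (boundedOrbitSet f)) = p := by
    intro x
    obtain ⟨y, hyx, hy⟩ := htwo x
    obtain ⟨n, z, hz, hzn⟩ := blow_up (hd.iterate N) (p := p.1) (a := x.1) (b := y.1)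
      (by rw [bos_iterate hcont hN]; exact p.2) hpN (fun h => hyx (Subtype.ext h.symm)) hr
    rw [← Function.iterate_mul] at hzn
    have hzK : z ∈ boundedOrbitSet f := by
      rw [← bos_iterate_iff (N * n)]
      rcases hzn with h | h <;> rw [h]
      exacts [x.2, y.2]
    have h1 : (F^[N * n] ⟨z, hzK⟩ : boundedOrbitSet f) = x ∨ F^[N * n] ⟨z, hzK⟩ = y := by
      rcases hzn with h | h
      · left; apply Subtype.ext; rw [hFn, h]
      · right; apply Subtype.ext; rw [hFn, h]
    have h2 := hσ (N * n) ⟨z, hzK⟩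
    rw [hpr ⟨z, hzK⟩ hz, hpfix'] at h2
    rcases h1 with h1 | h1
    · rw [h2, h1]
    · rw [h2, h1, hy]
  apply hnpc
  rw [isPreconnected_iff_preconnectedSpace, preconnectedSpace_iff_connectedComponent]
  intro x
  ext y
  simp only [Set.mem_univ, iff_true]
  have := (hall y).trans (hall x).symm
  exact ConnectedComponents.coe_eq_coe'.1 this
end

section
/- Let f : ℂ → ℂ be the entire function defined by the infinite product f(z) = ∏_{n=1}^∞ (1 + z/2ⁿ)². Then K(f) is totally disconnected. -/
open Filter Topology

noncomputable def PP (s : Finset ℕ) (z : ℂ) : ℂ := ∏ i ∈ s, (1 + z / 2 ^ (i + 1))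
noncomputable def GG (s : Finset ℕ) (z : ℂ) : ℂ := ∑ i ∈ s, Complex.log (1 + z / 2 ^ (i + 1))

lemma fac_im (i : ℕ) (z : ℂ) : (1 + z / 2 ^ (i + 1)).im = z.im / 2 ^ (i + 1) := by
  have : (1 + z / 2 ^ (i + 1)) = 1 + z / ((2 ^ (i + 1) : ℝ) : ℂ) := by push_cast; rfl
  rw [this, Complex.add_im, Complex.div_ofReal_im]; simp

lemma fac_im_pos (i : ℕ) {z : ℂ} (hz : 0 < z.im) : 0 < (1 + z / 2 ^ (i + 1)).im := by
  rw [fac_im]; positivity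

lemma fac_slit (i : ℕ) {z : ℂ} (hz : 0 < z.im) : (1 + z / 2 ^ (i + 1)) ∈ Complex.slitPlane :=
  Or.inr (fac_im_pos i hz).ne'

lemma exp_GG (s : Finset ℕ) {z : ℂ} (hz : 0 < z.im) : Complex.exp (GG s z) = PP s z := by
  rw [GG, PP, Complex.exp_sum]
  exact Finset.prod_congr rfl fun i _ => Complex.exp_log (Complex.slitPlane_ne_zero (fac_slit i hz))

lemma hasDerivAt_GG (s : Finset ℕ) {z : ℂ} (hz : 0 < z.im) :
    HasDerivAt (GG s) (∑ i ∈ s, (1 / 2 ^ (i + 1)) / (1 + z / 2 ^ (i + 1))) z := by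
  unfold GG
  apply HasDerivAt.fun_sum
  intro i _
  exact (((hasDerivAt_id z).div_const _).const_add 1).clog (fac_slit i hz)

lemma GG_deriv_im (s : Finset ℕ) (hs : s.Nonempty) {z : ℂ} (hz : 0 < z.im) :
    (∑ i ∈ s, ((1 : ℂ) / 2 ^ (i + 1)) / (1 + z / 2 ^ (i + 1))).im < 0 := by
  rw [Complex.im_sum]
  apply Finset.sum_neg _ hs
  intro i _
  have h1 : ((1 : ℂ) / 2 ^ (i + 1)) = ((1 / 2 ^ (i + 1) : ℝ) : ℂ) := by push_cast; rfl
  rw [h1, div_eq_mul_inv, Complex.im_ofReal_mul, Complex.inv_im]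
  have := fac_im_pos i hz
  have h3 : 0 < Complex.normSq (1 + z / 2 ^ (i + 1)) :=
    Complex.normSq_pos.2 (Complex.slitPlane_ne_zero (fac_slit i hz))
  have : -(1 + z / 2 ^ (i + 1)).im / Complex.normSq (1 + z / 2 ^ (i + 1)) < 0 :=
    div_neg_of_neg_of_pos (by linarith) h3
  exact mul_neg_of_pos_of_neg (by positivity) this

lemma GG_inj (s : Finset ℕ) (hs : s.Nonempty) {z w : ℂ} (hz : 0 < z.im) (hw : 0 < w.im)
    (h : GG s z = GG s w) : z = w := by
  by_contra hne
  have hd : z - w ≠ 0 := sub_ne_zero.2 hne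
  let φ : ℝ → ℝ := fun t => (GG s (w + t * (z - w)) / (z - w)).im
  have him : ∀ t ∈ Set.Icc (0 : ℝ) 1, 0 < (w + t * (z - w)).im := by
    intro t ht
    have : (w + t * (z - w)).im = (1 - t) * w.im + t * z.im := by
      simp; ring
    rw [this]
    rcases eq_or_lt_of_le ht.1 with h0 | h0
    · rw [← h0]; simpa using hw
    · nlinarith [mul_pos h0 hz, mul_nonneg (sub_nonneg.2 ht.2) hw.le]
  have hder : ∀ t ∈ Set.Icc (0 : ℝ) 1, HasDerivAt φ
      ((∑ i ∈ s, ((1 : ℂ) / 2 ^ (i + 1)) / (1 + (w + t * (z - w)) / 2 ^ (i + 1))).im) t := by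
    intro t ht
    have h1 : HasDerivAt (fun t : ℂ => w + t * (z - w)) (z - w) (t : ℂ) := by
      simpa using ((hasDerivAt_id (t : ℂ)).mul_const (z - w)).const_add w
    have h2 := (HasDerivAt.comp (t : ℂ) (hasDerivAt_GG s (him t ht)) h1).div_const (z - w)
    rw [mul_div_cancel_right₀ _ hd] at h2
    have h3 := h2.comp_ofReal
    have h4 := (Complex.imCLM.hasFDerivAt.comp_hasDerivAt t h3)
    exact h4
  have hanti : StrictAntiOn φ (Set.Icc 0 1) := by
    apply strictAntiOn_of_deriv_neg (convex_Icc 0 1)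
    · exact fun t ht => (hder t ht).continuousAt.continuousWithinAt
    · intro t ht
      rw [interior_Icc] at ht
      have ht' := Set.Ioo_subset_Icc_self ht
      rw [(hder t ht').deriv]
      exact GG_deriv_im s hs (him t ht')
  have := hanti (by simp : (0 : ℝ) ∈ Set.Icc (0 : ℝ) 1) (by simp : (1 : ℝ) ∈ Set.Icc (0 : ℝ) 1) one_pos
  simp [φ, h] at this

lemma PP_diff (s : Finset ℕ) : Differentiable ℂ (PP s) := by
  unfold PP
  fun_prop

lemma PP_deriv_ne (s : Finset ℕ) (hs : s.Nonempty) {z : ℂ} (hz : 0 < z.im) :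
    deriv (PP s) z ≠ 0 := by
  have h1 := (hasDerivAt_GG s hz).cexp
  have h2 : PP s =ᶠ[𝓝 z] fun x => Complex.exp (GG s x) := by
    have : {x : ℂ | 0 < x.im} ∈ 𝓝 z := (isOpen_lt continuous_const Complex.continuous_im).mem_nhds hz
    filter_upwards [this] with x hx
    exact (exp_GG s hx).symm
  rw [(h1.congr_of_eventuallyEq h2).deriv]
  refine mul_ne_zero (Complex.exp_ne_zero _) fun h => ?_
  have := GG_deriv_im s hs hz
  rw [h] at this
  simp at this

lemma PP_im (s : Finset ℕ) {z : ℂ} (hz : 0 < z.im) :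
    (PP s z).im = ‖PP s z‖ * Real.sin (GG s z).im := by
  rw [← exp_GG s hz, Complex.exp_im, Complex.norm_exp]

lemma PP_ne (s : Finset ℕ) {z : ℂ} (hz : 0 < z.im) : PP s z ≠ 0 := by
  rw [← exp_GG s hz]; exact Complex.exp_ne_zero _

lemma PP_real (s : Finset ℕ) {z : ℂ} (hz : z.im = 0) : (PP s z).im = 0 := by
  have : z = (z.re : ℂ) := Complex.ext rfl (by simp [hz])
  rw [this]
  have : PP s (z.re : ℂ) = ((∏ i ∈ s, (1 + z.re / 2 ^ (i + 1)) : ℝ) : ℂ) := by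
    unfold PP; push_cast; rfl
  rw [this, Complex.ofReal_im]

lemma PP_tendsto (s : Finset ℕ) (hs : s.Nonempty) :
    Tendsto (fun z => ‖PP s z‖) (Bornology.cobounded ℂ) atTop := by
  have h1 : ∀ i : ℕ, Tendsto (fun z : ℂ => ‖1 + z / 2 ^ (i + 1)‖) (Bornology.cobounded ℂ) atTop := by
    intro i
    have h := (tendsto_norm_cobounded_atTop (E := ℂ)).atTop_div_const
      (show (0 : ℝ) < 2 ^ (i + 1) by positivity)
    have h' := tendsto_atTop_add_const_right _ (-1) h
    refine tendsto_atTop_mono (fun z => ?_) h'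
    have := norm_sub_le (1 + z / 2 ^ (i + 1)) 1
    simp at this ⊢
    linarith
  induction hs using Finset.Nonempty.cons_induction with
  | singleton a => simpa [PP] using h1 a
  | cons a s ha hs ih =>
    have := (h1 a).atTop_mul_atTop₀ ih
    refine this.congr fun z => ?_
    rw [PP, PP, Finset.prod_cons, norm_mul]

lemma sin_ne_of_strip {x : ℝ} {k : ℤ} (h1 : k * Real.pi < x) (h2 : x < (k + 1) * Real.pi) :
    Real.sin x ≠ 0 := by
  intro h
  obtain ⟨n, hn⟩ := Real.sin_eq_zero_iff.1 h
  rw [← hn] at h1 h2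
  have h1' := lt_of_mul_lt_mul_right h1 Real.pi_pos.le
  have h2' := lt_of_mul_lt_mul_right h2 Real.pi_pos.le
  have a1 : k < n := by exact_mod_cast h1'
  have a2 : n < k + 1 := by exact_mod_cast h2'
  omega

lemma norm_sub_le_conj {z w : ℂ} (h : 0 ≤ z.im * w.im) :
    ‖z - w‖ ≤ ‖z - (starRingEnd ℂ) w‖ := by
  rw [← sq_le_sq₀ (norm_nonneg _) (norm_nonneg _), ← Complex.normSq_eq_norm_sq,
    ← Complex.normSq_eq_norm_sq, Complex.normSq_apply, Complex.normSq_apply]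
  simp
  nlinarith

lemma norm_sub_eq_conj {z w : ℂ} (h : z.im = 0) :
    ‖z - w‖ = ‖z - (starRingEnd ℂ) w‖ := by
  rw [← sq_eq_sq₀ (norm_nonneg _) (norm_nonneg _), ← Complex.normSq_eq_norm_sq,
    ← Complex.normSq_eq_norm_sq, Complex.normSq_apply, Complex.normSq_apply]
  simp [h]

lemma PP_schwarz (s : Finset ℕ) (hs : s.Nonempty) (k : ℤ) {z w : ℂ} (hz : 0 < z.im) (hw : 0 < w.im)
    (hz1 : k * Real.pi < (GG s z).im) (hz2 : (GG s z).im < (k + 1) * Real.pi)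
    (hw1 : k * Real.pi < (GG s w).im) (hw2 : (GG s w).im < (k + 1) * Real.pi) :
    ‖z - w‖ * ‖PP s z - (starRingEnd ℂ) (PP s w)‖ ≤ ‖z - (starRingEnd ℂ) w‖ * ‖PP s z - PP s w‖ := by
  let H : Set ℂ := {x | 0 < x.im}
  have hH : IsOpen H := isOpen_lt continuous_const Complex.continuous_im
  let U : Set ℂ := H ∩ (fun x => (GG s x).im) ⁻¹' (Set.Ioo (k * Real.pi) ((k + 1) * Real.pi))
  have hcont : ContinuousOn (fun x => (GG s x).im) H := fun x hx =>
    (Complex.continuous_im.continuousAt.comp (hasDerivAt_GG s hx).continuousAt).continuousWithinAt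
  have hU : IsOpen U := hcont.isOpen_inter_preimage hH isOpen_Ioo
  have hwU : w ∈ U := ⟨hw, hw1, hw2⟩
  have hzU : z ∈ U := ⟨hz, hz1, hz2⟩
  have hUim : ∀ x ∈ U, (PP s x).im ≠ 0 := by
    intro x hx
    rw [PP_im s hx.1]
    exact mul_ne_zero (norm_ne_zero_iff.2 (PP_ne s hx.1)) (sin_ne_of_strip hx.2.1 hx.2.2)
  have hclim : ∀ x ∈ closure U, 0 ≤ x.im := by
    intro x hx
    have : closure U ⊆ {x : ℂ | 0 ≤ x.im} :=
      closure_minimal (fun y hy => le_of_lt (α := ℝ) hy.1) (isClosed_le continuous_const Complex.continuous_im)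
    exact this hx
  have hfr : ∀ x ∈ closure U, x ∉ U → (PP s x).im = 0 := by
    intro x hx hxU
    rcases (hclim x hx).eq_or_lt with h0 | h0
    · exact PP_real s h0.symm
    · have hc : ContinuousAt (fun x => (GG s x).im) x := hcont.continuousAt (hH.mem_nhds h0)
      have hmem : (GG s x).im ∈ closure (Set.Ioo (k * Real.pi) ((k + 1) * Real.pi)) :=
        closure_mono (Set.image_subset_iff.2 fun y hy => hy.2) (hc.continuousWithinAt.mem_closure_image hx)
      have hlt : (k : ℝ) * Real.pi < (k + 1) * Real.pi := by nlinarith [Real.pi_pos]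
      rw [closure_Ioo hlt.ne] at hmem
      rw [PP_im s h0]
      have : (GG s x).im = k * Real.pi ∨ (GG s x).im = (k + 1) * Real.pi := by
        by_contra hcon
        push Not at hcon
        exact hxU ⟨h0, lt_of_le_of_ne hmem.1 (Ne.symm hcon.1), lt_of_le_of_ne hmem.2 hcon.2⟩
      rcases this with h | h
      · rw [h, Real.sin_int_mul_pi, mul_zero]
      · rw [h]
        have := Real.sin_int_mul_pi (k + 1)
        push_cast at this
        rw [this, mul_zero]
  have hinj : ∀ x ∈ closure U, PP s x = PP s w → x = w := by
    intro x hx h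
    by_cases hxU : x ∈ U
    · rw [← exp_GG s hxU.1, ← exp_GG s hw, Complex.exp_eq_exp_iff_exists_int] at h
      obtain ⟨n, hn⟩ := h
      have him := congrArg Complex.im hn
      have e : ((n : ℂ) * (2 * Real.pi * Complex.I)).im = n * (2 * Real.pi) := by
        have : ((n : ℂ) * (2 * Real.pi * Complex.I)) = ((n * (2 * Real.pi) : ℝ) : ℂ) * Complex.I := by
          push_cast; ring
        rw [this]; simp
      rw [Complex.add_im, e] at him
      have a1 := hxU.2.1
      have a2 := hxU.2.2
      simp only at a1 a2
      have hp := Real.pi_pos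
      have b1 : (n : ℝ) < 1 := by by_contra hc; push Not at hc; nlinarith
      have b2 : (-1 : ℝ) < n := by by_contra hc; push Not at hc; nlinarith
      have b3 : n = 0 := by
        have c1 : n < 1 := by exact_mod_cast b1
        have c2 : -1 < n := by exact_mod_cast b2
        omega
      rw [b3] at hn
      simp only [Int.cast_zero, zero_mul, add_zero] at hn
      exact GG_inj s hs hxU.1 hw hn
    · have := hfr x hx hxU
      rw [h] at this
      exact absurd this (hUim w hwU)
  have hds : Differentiable ℂ (dslope (PP s) w) := by
    rw [← differentiableOn_univ, Complex.differentiableOn_dslope Filter.univ_mem]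
    exact (PP_diff s).differentiableOn
  have hds0 : ∀ x ∈ closure U, dslope (PP s) w x ≠ 0 := by
    intro x hx
    by_cases hxw : x = w
    · rw [hxw, dslope_same]; exact PP_deriv_ne s hs hw
    · rw [dslope_of_ne _ hxw, slope_def_field]
      exact div_ne_zero (sub_ne_zero.2 fun h => hxw (hinj x hx h)) (sub_ne_zero.2 hxw)
  have hzw0 : ∀ x ∈ closure U, x - (starRingEnd ℂ) w ≠ 0 := by
    intro x hx h
    have := congrArg Complex.im h
    simp at this
    linarith [hclim x hx]
  let h : ℂ → ℂ := fun x => (PP s x - (starRingEnd ℂ) (PP s w)) /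
    (dslope (PP s) w x * (x - (starRingEnd ℂ) w))
  have hhd : ∀ x ∈ closure U, DifferentiableAt ℂ h x := by
    intro x hx
    exact ((PP_diff s x).sub_const _).div ((hds x).mul (differentiableAt_id.sub_const _))
      (mul_ne_zero (hds0 x hx) (hzw0 x hx))
  have hhn : ∀ x ∈ closure U, x ≠ w → ‖h x‖ =
      ‖x - w‖ * ‖PP s x - (starRingEnd ℂ) (PP s w)‖ / (‖x - (starRingEnd ℂ) w‖ * ‖PP s x - PP s w‖) := by
    intro x hx hxw
    have e1 : x - w ≠ 0 := sub_ne_zero.2 hxw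
    have e2 : PP s x - PP s w ≠ 0 := sub_ne_zero.2 fun h => hxw (hinj x hx h)
    simp only [h]
    rw [dslope_of_ne _ hxw, slope_def_field, norm_div, norm_mul, norm_div]
    have := norm_ne_zero_iff.2 e1
    have := norm_ne_zero_iff.2 e2
    have := norm_ne_zero_iff.2 (hzw0 x hx)
    field_simp
  by_cases hzw : z = w
  · subst hzw; simp
  have hkey : ∀ ε > (0 : ℝ), ‖h z‖ ≤ 1 + ε := by
    intro ε hε
    set C := ‖PP s w‖ with hC
    have hC0 : 0 ≤ C := norm_nonneg _
    have hev := (PP_tendsto s hs).eventually_gt_atTop (C + 2 * C / ε)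
    have hev2 := hev.and (tendsto_norm_cobounded_atTop.eventually_gt_atTop (max ‖z‖ ‖w‖))
    obtain ⟨R, hR⟩ : ∃ R : ℝ, ∀ x : ℂ, R ≤ ‖x‖ → C + 2 * C / ε < ‖PP s x‖ ∧ max ‖z‖ ‖w‖ < ‖x‖ := by
      rw [← comap_norm_atTop, Filter.eventually_comap, Filter.eventually_atTop] at hev2
      obtain ⟨R, hR⟩ := hev2
      exact ⟨R, fun x hx => hR ‖x‖ hx x rfl⟩
    let R' := max R (max ‖z‖ ‖w‖ + 1)
    have hR'z : ‖z‖ < R' := by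
      have := le_max_left ‖z‖ ‖w‖
      have := le_max_right R (max ‖z‖ ‖w‖ + 1)
      simp only [R']; linarith
    have hbd : Bornology.IsBounded (U ∩ Metric.ball 0 R') :=
      Metric.isBounded_ball.subset Set.inter_subset_right
    have hcl : closure (U ∩ Metric.ball 0 R') ⊆ closure U := closure_mono Set.inter_subset_left
    refine Complex.norm_le_of_forall_mem_frontier_norm_le hbd (f := h) (z := z) ?_ ?_ ?_
    · refine DifferentiableOn.diffContOnCl fun x hx => (hhd x (hcl hx)).differentiableWithinAt
    · intro x hx
      have hxc : x ∈ closure U := hcl hx.1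
      by_cases hxU : x ∈ U
      · have hxR : R' ≤ ‖x‖ := by
          by_contra hcon
          push Not at hcon
          have hop : IsOpen (U ∩ Metric.ball 0 R') := hU.inter Metric.isOpen_ball
          apply hx.2
          rw [hop.interior_eq]
          exact ⟨hxU, by simpa using hcon⟩
        obtain ⟨h1, h2⟩ := hR x ((le_max_left _ _).trans hxR)
        have hxw : x ≠ w := by
          rintro rfl
          exact absurd h2 (not_lt.2 (le_max_right _ _))
        rw [hhn x hxc hxw]
        have n1 := norm_sub_le_conj (z := x) (w := w) (mul_nonneg (hclim x hxc) hw.le)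
        have n2 : ‖PP s x - (starRingEnd ℂ) (PP s w)‖ ≤ ‖PP s x‖ + C := by
          have := norm_sub_le (PP s x) ((starRingEnd ℂ) (PP s w))
          rwa [RCLike.norm_conj] at this
        have n3 : ‖PP s x‖ - C ≤ ‖PP s x - PP s w‖ := norm_sub_norm_le _ _
        have n4 : ‖PP s x‖ + C ≤ (1 + ε) * (‖PP s x‖ - C) := by
          have : ε * (2 * C / ε) = 2 * C := by field_simp
          nlinarith
        have n5 : 0 < ‖PP s x - PP s w‖ := norm_pos_iff.2 (sub_ne_zero.2 fun h => hxw (hinj x hxc h))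
        have n6 : 0 < ‖x - (starRingEnd ℂ) w‖ := norm_pos_iff.2 (hzw0 x hxc)
        rw [div_le_iff₀ (mul_pos n6 n5)]
        have n7 : ‖PP s x - (starRingEnd ℂ) (PP s w)‖ ≤ (1 + ε) * ‖PP s x - PP s w‖ := by
          nlinarith
        calc _ ≤ ‖x - (starRingEnd ℂ) w‖ * ((1 + ε) * ‖PP s x - PP s w‖) :=
              mul_le_mul n1 n7 (norm_nonneg _) n6.le
          _ = _ := by ring
      · have hxw : x ≠ w := by rintro rfl; exact hxU hwU
        rw [hhn x hxc hxw]
        have n1 := norm_sub_le_conj (z := x) (w := w) (mul_nonneg (hclim x hxc) hw.le)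
        rw [← norm_sub_eq_conj (w := PP s w) (hfr x hxc hxU)]
        refine (div_le_one_of_le₀ ?_ (by positivity)).trans (by linarith)
        exact mul_le_mul_of_nonneg_right n1 (norm_nonneg _)
    · exact subset_closure ⟨hzU, by simpa using hR'z⟩
  have hfin : ‖h z‖ ≤ 1 := le_of_forall_pos_le_add hkey
  have hzc := subset_closure hzU
  rw [hhn z hzc hzw] at hfin
  have n5 : 0 < ‖PP s z - PP s w‖ := norm_pos_iff.2 (sub_ne_zero.2 fun h => hzw (hinj z hzc h))
  have n6 : 0 < ‖z - (starRingEnd ℂ) w‖ := norm_pos_iff.2 (hzw0 z hzc)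
  rwa [div_le_one (mul_pos n6 n5)] at hfin

noncomputable def FF (z : ℂ) : ℂ := ∏' n : ℕ, (1 + z / 2 ^ (n + 1))
noncomputable def TT (z : ℂ) : ℝ := ∑' n : ℕ, Complex.arg (1 + z / 2 ^ (n + 1))

lemma norm_fac (z : ℂ) (n : ℕ) : ‖z / 2 ^ (n + 1)‖ = ‖z‖ * (1 / 2) ^ (n + 1) := by
  simp [div_eq_mul_inv]

lemma summ_geo (c : ℝ) : Summable fun n : ℕ => c * (1 / 2 : ℝ) ^ (n + 1) :=
  ((summable_nat_add_iff 1).2 summable_geometric_two).mul_left c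

lemma FF_hasProd (z : ℂ) : HasProd (fun n : ℕ => 1 + z / 2 ^ (n + 1)) (FF z) := by
  refine (multipliable_one_add_of_summable ?_).hasProd
  simp_rw [norm_fac]
  exact summ_geo _

lemma FF_tendsto (z : ℂ) : Tendsto (fun N : ℕ => PP (Finset.range (N + 1)) z) atTop (𝓝 (FF z)) :=
  (FF_hasProd z).tendsto_prod_nat.comp (tendsto_add_atTop_nat 1)

lemma FF_sq (z : ℂ) : ∏' n : ℕ, (1 + z / 2 ^ (n + 1)) ^ 2 = FF z ^ 2 := by
  have := (FF_hasProd z).mul (FF_hasProd z)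
  simp_rw [← sq] at this
  exact this.tprod_eq

lemma FF_cont : Continuous FF := by
  rw [continuous_iff_continuousAt]
  intro z
  have h := Summable.hasProdLocallyUniformlyOn_nat_one_add (f := fun (n : ℕ) (x : ℂ) => x / 2 ^ (n + 1))
    (K := Metric.ball (0 : ℂ) (‖z‖ + 1)) Metric.isOpen_ball (hu := summ_geo (‖z‖ + 1)) (h :=
    Eventually.of_forall fun n x hx => by
      rw [norm_fac]
      have : ‖x‖ < ‖z‖ + 1 := by simpa using hx
      gcongr) (hcts := fun n => by fun_prop)
  have hc : ContinuousOn FF (Metric.ball (0 : ℂ) (‖z‖ + 1)) := by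
    refine TendstoLocallyUniformlyOn.continuousOn h (Frequently.of_forall fun n => ?_)
    fun_prop
  exact hc.continuousAt (Metric.isOpen_ball.mem_nhds (by simp))

lemma arg_le (x : ℂ) : |Complex.arg (1 + x)| ≤ 2 * Real.pi * ‖x‖ := by
  have hp := Real.pi_gt_three
  have hx := norm_nonneg x
  by_cases h : ‖x‖ ≤ 1 / 2
  · have h1 := Complex.norm_log_one_add_half_le_self h
    have h2 := Complex.abs_im_le_norm (Complex.log (1 + x))
    rw [Complex.log_im] at h2
    nlinarith
  · push Not at h
    have := Complex.abs_arg_le_pi (1 + x)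
    nlinarith

lemma arg_le' (z : ℂ) (n : ℕ) :
    ‖Complex.arg (1 + z / 2 ^ (n + 1))‖ ≤ (2 * Real.pi * ‖z‖) * (1 / 2) ^ (n + 1) := by
  have := arg_le (z / 2 ^ (n + 1))
  rw [norm_fac] at this
  rw [Real.norm_eq_abs]
  linarith

lemma TT_hasSum (z : ℂ) : HasSum (fun n : ℕ => Complex.arg (1 + z / 2 ^ (n + 1))) (TT z) :=
  (Summable.of_norm_bounded (summ_geo _) (arg_le' z)).hasSum

lemma GG_im (s : Finset ℕ) (z : ℂ) : (GG s z).im = ∑ n ∈ s, Complex.arg (1 + z / 2 ^ (n + 1)) := by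
  simp [GG, Complex.im_sum, Complex.log_im]

lemma TT_tendsto (z : ℂ) :
    Tendsto (fun N : ℕ => (GG (Finset.range (N + 1)) z).im) atTop (𝓝 (TT z)) := by
  simp_rw [GG_im]
  exact (TT_hasSum z).tendsto_sum_nat.comp (tendsto_add_atTop_nat 1)

lemma TT_cont : ContinuousOn TT {z : ℂ | 0 < z.im} := by
  intro z hz
  have hO : IsOpen ({z : ℂ | 0 < z.im} ∩ Metric.ball 0 (‖z‖ + 1)) :=
    (isOpen_lt continuous_const Complex.continuous_im).inter Metric.isOpen_ball
  have hc : ContinuousOn TT ({z : ℂ | 0 < z.im} ∩ Metric.ball 0 (‖z‖ + 1)) := by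
    refine continuousOn_tsum (fun n x hx => ?_) (summ_geo (2 * Real.pi * (‖z‖ + 1))) ?_
    · have h1 : ContinuousAt (fun x : ℂ => 1 + x / 2 ^ (n + 1)) x := by fun_prop
      exact (ContinuousAt.comp (f := fun x : ℂ => 1 + x / 2 ^ (n + 1)) (g := Complex.arg)
        (Complex.continuousAt_arg (fac_slit n hx.1)) h1).continuousWithinAt
    · intro n x hx
      refine (arg_le' x n).trans ?_
      have : ‖x‖ < ‖z‖ + 1 := by simpa using hx.2
      have := Real.pi_pos
      gcongr
  exact (hc.continuousAt (hO.mem_nhds ⟨hz, by simp⟩)).continuousWithinAt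

lemma FF_im {z : ℂ} (hz : 0 < z.im) : (FF z).im = ‖FF z‖ * Real.sin (TT z) := by
  have h1 := (Complex.continuous_im.tendsto _).comp (FF_tendsto z)
  have h2 := (FF_tendsto z).norm.mul ((Real.continuous_sin.tendsto _).comp (TT_tendsto z))
  refine tendsto_nhds_unique h1 (h2.congr fun N => ?_)
  exact (PP_im _ hz).symm

lemma FF_conj (z : ℂ) : FF ((starRingEnd ℂ) z) = (starRingEnd ℂ) (FF z) := by
  have := (FF_hasProd z).map (starRingEnd ℂ) Complex.continuous_conj
  refine ((FF_hasProd _).unique ?_)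
  convert this using 2 with n
  simp [map_ofNat]

lemma FF_real {z : ℂ} (hz : z.im = 0) : (FF z).im = 0 := by
  have := FF_conj z
  rw [Complex.conj_eq_iff_im.2 hz] at this
  exact Complex.conj_eq_iff_im.1 this.symm

lemma strip {s : Set ℂ} (hs : IsPreconnected s) (hH : ∀ z ∈ s, 0 < z.im)
    (hF : ∀ z ∈ s, (FF z).im ≠ 0) {z w : ℂ} (hz : z ∈ s) (hw : w ∈ s) :
    ∃ k : ℤ, (k * Real.pi < TT z ∧ TT z < (k + 1) * Real.pi) ∧
      (k * Real.pi < TT w ∧ TT w < (k + 1) * Real.pi) := by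
  have hp := Real.pi_pos
  have hne : ∀ x ∈ s, ∀ m : ℤ, TT x ≠ m * Real.pi := by
    intro x hx m h
    apply hF x hx
    rw [FF_im (hH x hx), h, Real.sin_int_mul_pi, mul_zero]
  have himg : (TT '' s).OrdConnected := (hs.image TT (TT_cont.mono hH)).ordConnected
  have hmid : ∀ x ∈ s, ∀ y ∈ s, ∀ m : ℤ, TT x ≤ m * Real.pi → m * Real.pi ≤ TT y → False := by
    intro x hx y hy m h1 h2
    obtain ⟨u, hu, he⟩ := himg.out (Set.mem_image_of_mem _ hx) (Set.mem_image_of_mem _ hy) ⟨h1, h2⟩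
    exact hne u hu m he
  set k := ⌊TT z / Real.pi⌋ with hk
  have k1 : (k : ℝ) * Real.pi ≤ TT z := by
    rw [← le_div_iff₀ hp]; exact Int.floor_le _
  have k2 : TT z < (k + 1) * Real.pi := by
    rw [← div_lt_iff₀ hp]; exact Int.lt_floor_add_one _
  refine ⟨k, ⟨lt_of_le_of_ne k1 (hne z hz k).symm, k2⟩, ?_, ?_⟩
  · by_contra hc
    push Not at hc
    exact hmid w hw z hz k hc k1
  · by_contra hc
    push Not at hc
    exact hmid z hz w hw (k + 1) (by push_cast; exact k2.le) (by push_cast; exact hc)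

lemma sin_mul_pos {x y : ℝ} {k : ℤ} (h1 : k * Real.pi < x) (h2 : x < (k + 1) * Real.pi)
    (h3 : k * Real.pi < y) (h4 : y < (k + 1) * Real.pi) : 0 < Real.sin x * Real.sin y := by
  have a := Real.sin_pos_of_pos_of_lt_pi (x := x - k * Real.pi) (by linarith) (by linarith)
  have b := Real.sin_pos_of_pos_of_lt_pi (x := y - k * Real.pi) (by linarith) (by linarith)
  rw [Real.sin_sub_int_mul_pi] at a b
  have := mul_pos a b
  rcases Int.even_or_odd k with h | h
  · simpa [h.neg_one_zpow] using this
  · simpa [h.neg_one_zpow] using this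

lemma schwarzH {s : Set ℂ} (hs : IsPreconnected s) (hH : ∀ z ∈ s, 0 < z.im)
    (hF : ∀ z ∈ s, (FF z).im ≠ 0) {z w : ℂ} (hz : z ∈ s) (hw : w ∈ s) :
    0 < (FF z).im * (FF w).im ∧
    ‖z - w‖ * ‖FF z - (starRingEnd ℂ) (FF w)‖ ≤ ‖z - (starRingEnd ℂ) w‖ * ‖FF z - FF w‖ := by
  obtain ⟨k, ⟨a1, a2⟩, b1, b2⟩ := strip hs hH hF hz hw
  constructor
  · have hz0 : 0 < ‖FF z‖ := norm_pos_iff.2 fun h => hF z hz (by simp [h])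
    have hw0 : 0 < ‖FF w‖ := norm_pos_iff.2 fun h => hF w hw (by simp [h])
    rw [FF_im (hH z hz), FF_im (hH w hw), mul_mul_mul_comm]
    exact mul_pos (mul_pos hz0 hw0) (sin_mul_pos a1 a2 b1 b2)
  · have tz := FF_tendsto z
    have tw := FF_tendsto w
    refine le_of_tendsto_of_tendsto
      (((tz.sub ((Complex.continuous_conj.tendsto _).comp tw)).norm).const_mul ‖z - w‖)
      (((tz.sub tw).norm).const_mul ‖z - (starRingEnd ℂ) w‖) ?_
    filter_upwards [(TT_tendsto z).eventually_const_lt a1, (TT_tendsto z).eventually_lt_const a2,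
      (TT_tendsto w).eventually_const_lt b1, (TT_tendsto w).eventually_lt_const b2] with N c1 c2 d1 d2
    exact PP_schwarz _ (by simp) k (hH z hz) (hH w hw) c1 c2 d1 d2

lemma schwarz {s : Set ℂ} (hs : IsPreconnected s) (hH : ∀ z ∈ s, z.im ≠ 0)
    (hF : ∀ z ∈ s, (FF z).im ≠ 0) {z w : ℂ} (hz : z ∈ s) (hw : w ∈ s) :
    0 < z.im * w.im ∧ 0 < (FF z).im * (FF w).im ∧
    ‖z - w‖ * ‖FF z - (starRingEnd ℂ) (FF w)‖ ≤ ‖z - (starRingEnd ℂ) w‖ * ‖FF z - FF w‖ := by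
  have hoc : (Complex.im '' s).OrdConnected :=
    (hs.image _ Complex.continuous_im.continuousOn).ordConnected
  have hmid : ∀ x ∈ s, ∀ y ∈ s, x.im ≤ 0 → 0 ≤ y.im → False := by
    intro x hx y hy h1 h2
    obtain ⟨u, hu, he⟩ := hoc.out (Set.mem_image_of_mem _ hx) (Set.mem_image_of_mem _ hy) ⟨h1, h2⟩
    exact hH u hu he
  rcases lt_or_gt_of_ne (hH z hz) with h0 | h0
  · have hneg : ∀ x ∈ s, x.im < 0 := fun x hx => by
      by_contra hc
      exact hmid z hz x hx h0.le (not_lt.1 hc)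
    refine ⟨mul_pos_of_neg_of_neg h0 (hneg w hw), ?_⟩
    have := schwarzH (s := (starRingEnd ℂ) '' s) (hs.image _ Complex.continuous_conj.continuousOn)
      (by rintro _ ⟨x, hx, rfl⟩; simpa using hneg x hx)
      (by rintro _ ⟨x, hx, rfl⟩; rw [FF_conj]; simpa using hF x hx)
      (Set.mem_image_of_mem _ hz) (Set.mem_image_of_mem _ hw)
    simpa only [FF_conj, ← map_sub, RCLike.norm_conj, Complex.conj_im, neg_mul_neg] using this
  · have hpos : ∀ x ∈ s, 0 < x.im := fun x hx => by
      by_contra hc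
      exact hmid x hx z hz (not_lt.1 hc) h0.le
    exact ⟨mul_pos h0 (hpos w hw), schwarzH hs hpos hF hz hw⟩

lemma FF_nonneg {x : ℝ} (hx : 0 ≤ x) : ∃ r : ℝ, FF x = r ∧ 1 + x / 2 ≤ r := by
  have him : (FF x).im = 0 := FF_real (Complex.ofReal_im x)
  refine ⟨(FF x).re, Complex.ext rfl (by simp [him]), ?_⟩
  refine ge_of_tendsto' ((Complex.continuous_re.tendsto _).comp (FF_tendsto x)) fun N => ?_
  have : PP (Finset.range (N + 1)) (x : ℂ) =
      ((∏ i ∈ Finset.range (N + 1), (1 + x / 2 ^ (i + 1)) : ℝ) : ℂ) := by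
    unfold PP; push_cast; rfl
  simp only [Function.comp_apply, this, Complex.ofReal_re]
  rw [Finset.prod_range_succ']
  have h1 : 1 ≤ ∏ k ∈ Finset.range N, (1 + x / 2 ^ (k + 1 + 1)) := by
    refine (Finset.prod_const_one (s := Finset.range N)).symm.le.trans ?_
    refine Finset.prod_le_prod (fun _ _ => zero_le_one) fun i _ => ?_
    have : 0 ≤ x / 2 ^ (i + 1 + 1) := by positivity
    linarith
  have h2 : 0 ≤ x / 2 := by positivity
  norm_num
  nlinarith

lemma mem_K_map {f : ℂ → ℂ} {z : ℂ} (hz : z ∈ boundedOrbitSet f) : f z ∈ boundedOrbitSet f := by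
  have hz' : Bornology.IsBounded (Set.range fun n : ℕ => f^[n] z) := hz
  refine Bornology.IsBounded.subset hz' ?_
  rintro _ ⟨n, rfl⟩
  exact ⟨n + 1, rfl⟩

lemma mem_K_iter {f : ℂ → ℂ} {z : ℂ} (hz : z ∈ boundedOrbitSet f) (n : ℕ) :
    f^[n] z ∈ boundedOrbitSet f := by
  induction n with
  | zero => exact hz
  | succ n ih => rw [Function.iterate_succ_apply']; exact mem_K_map ih

section
variable {f : ℂ → ℂ}

lemma K_nonneg (hf : ∀ z, f z = FF z ^ 2) {x : ℝ} (hx : 0 ≤ x) : (x : ℂ) ∉ boundedOrbitSet f := by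
  intro h
  have key : ∀ n : ℕ, ∃ y : ℝ, f^[n] (x : ℂ) = y ∧ (n : ℝ) ≤ y := by
    intro n
    induction n with
    | zero => exact ⟨x, rfl, by simpa using hx⟩
    | succ n ih =>
      obtain ⟨y, h1, h2⟩ := ih
      have hy : 0 ≤ y := le_trans (Nat.cast_nonneg n) h2
      obtain ⟨r, h3, h4⟩ := FF_nonneg hy
      refine ⟨r ^ 2, ?_, ?_⟩
      · rw [Function.iterate_succ_apply', h1, hf, h3]; push_cast; rfl
      · push_cast; nlinarith
  have h' : Bornology.IsBounded (Set.range fun n : ℕ => f^[n] (x : ℂ)) := h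
  obtain ⟨C, hC⟩ := isBounded_iff_forall_norm_le.1 h'
  obtain ⟨n, hn⟩ := exists_nat_gt C
  obtain ⟨y, h1, h2⟩ := key n
  have h3 := hC _ ⟨n, rfl⟩
  simp only [h1, Complex.norm_real, Real.norm_eq_abs] at h3
  linarith [le_abs_self y]

lemma K_FF (hf : ∀ z, f z = FF z ^ 2) {z : ℂ} (hz : z ∈ boundedOrbitSet f) : (FF z).im ≠ 0 := by
  intro h
  have h1 := mem_K_map hz
  have h2 : f z = (((FF z).re ^ 2 : ℝ) : ℂ) := by
    have : FF z = ((FF z).re : ℂ) := Complex.ext rfl (by simp [h])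
    rw [hf, this]; push_cast; simp
  rw [h2] at h1
  exact K_nonneg hf (sq_nonneg _) h1

lemma K_im (hf : ∀ z, f z = FF z ^ 2) {z : ℂ} (hz : z ∈ boundedOrbitSet f) : z.im ≠ 0 :=
  fun h => K_FF hf hz (FF_real h)

lemma f_cont (hf : ∀ z, f z = FF z ^ 2) : Continuous f := by
  have : f = fun z => FF z ^ 2 := funext hf
  rw [this]; exact FF_cont.pow 2

lemma orbit_bd (hf : ∀ z, f z = FF z ^ 2) {p : ℂ} (hp : p ∈ boundedOrbitSet f) :
    ∃ R > 0, ∃ η > 0, ∀ n : ℕ, ‖f^[n] p‖ ≤ R ∧ η ≤ |(f^[n] p).im| := by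
  set O := Set.range fun n : ℕ => f^[n] p with hO
  have hOb : Bornology.IsBounded O := hp
  have hc : IsCompact (closure O) := hOb.isCompact_closure
  have hmap : ∀ x ∈ closure O, f x ∈ closure O := by
    intro x hx
    refine map_mem_closure (f_cont hf) hx ?_
    rintro _ ⟨n, rfl⟩
    exact ⟨n + 1, Function.iterate_succ_apply' f n p⟩
  have hit : ∀ x ∈ closure O, ∀ n : ℕ, f^[n] x ∈ closure O := by
    intro x hx n
    induction n with
    | zero => exact hx
    | succ n ih => rw [Function.iterate_succ_apply']; exact hmap _ ih
  have hK : ∀ x ∈ closure O, x ∈ boundedOrbitSet f := by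
    intro x hx
    refine Bornology.IsBounded.subset hc.isBounded ?_
    rintro _ ⟨n, rfl⟩
    exact hit x hx n
  have hne : (closure O).Nonempty := ⟨p, subset_closure ⟨0, rfl⟩⟩
  obtain ⟨x, hx, hmin⟩ := hc.exists_isMinOn hne
    (continuous_abs.comp Complex.continuous_im).continuousOn
  obtain ⟨C, hC⟩ := isBounded_iff_forall_norm_le.1 hOb
  refine ⟨max C 1, by positivity, |x.im|, abs_pos.2 (K_im hf (hK x hx)), fun n => ⟨?_, ?_⟩⟩
  · exact (hC _ ⟨n, rfl⟩).trans (le_max_left _ _)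
  · exact hmin (subset_closure ⟨n, rfl⟩)
end

lemma contr {a b : ℂ} {R η : ℝ} (hR : 0 < R) (hη : 0 < η) (ha : ‖a ^ 2‖ ≤ R) (hb : ‖b ^ 2‖ ≤ R)
    (ha' : η ≤ |(a ^ 2).im|) (hb' : η ≤ |(b ^ 2).im|) (hab : 0 < a.im * b.im) :
    ‖a + (starRingEnd ℂ) b‖ ≤ √(1 - η ^ 2 / (4 * R ^ 2)) * ‖a + b‖ := by
  have key : ∀ c : ℂ, ‖c ^ 2‖ ≤ R → η ≤ |(c ^ 2).im| →
      η ^ 2 / (4 * R) ≤ c.im ^ 2 ∧ c.re ^ 2 + c.im ^ 2 ≤ R := by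
    intro c h1 h2
    rw [norm_pow, ← Complex.normSq_eq_norm_sq, Complex.normSq_apply] at h1
    have e : (c ^ 2).im = 2 * (c.re * c.im) := by simp [sq]; ring
    have h3 : η ^ 2 ≤ (c ^ 2).im ^ 2 := by
      rw [← sq_abs (c ^ 2).im]; gcongr
    rw [e] at h3
    refine ⟨?_, by nlinarith⟩
    rw [div_le_iff₀ (by positivity)]
    nlinarith [mul_nonneg (sq_nonneg c.im) (sub_nonneg.2 h1), sq_nonneg (c.im ^ 2)]
  obtain ⟨a1, a2⟩ := key a ha ha'
  obtain ⟨b1, b2⟩ := key b hb hb'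
  have hab2 : η ^ 2 / (4 * R) ≤ a.im * b.im := by
    have h0 : 0 ≤ η ^ 2 / (4 * R) := by positivity
    refine (sq_le_sq₀ h0 hab.le).1 ?_
    calc (η ^ 2 / (4 * R)) ^ 2 = (η ^ 2 / (4 * R)) * (η ^ 2 / (4 * R)) := sq _
      _ ≤ a.im ^ 2 * b.im ^ 2 := mul_le_mul a1 b1 h0 (sq_nonneg _)
      _ = _ := by ring
  have hn : ‖a + b‖ ^ 2 = (a.re + b.re) ^ 2 + (a.im + b.im) ^ 2 := by
    rw [← Complex.normSq_eq_norm_sq, Complex.normSq_apply]; simp; ring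
  have hn' : ‖a + (starRingEnd ℂ) b‖ ^ 2 = (a.re + b.re) ^ 2 + (a.im - b.im) ^ 2 := by
    rw [← Complex.normSq_eq_norm_sq, Complex.normSq_apply]; simp; ring
  have hle : ‖a + b‖ ^ 2 ≤ 4 * R := by
    rw [hn]; nlinarith [sq_nonneg (a.re - b.re), sq_nonneg (a.im - b.im)]
  have hfin : ‖a + (starRingEnd ℂ) b‖ ^ 2 ≤ (1 - η ^ 2 / (4 * R ^ 2)) * ‖a + b‖ ^ 2 := by
    have e1 : η ^ 2 / (4 * R ^ 2) * ‖a + b‖ ^ 2 ≤ η ^ 2 / (4 * R ^ 2) * (4 * R) := by gcongr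
    have e2 : η ^ 2 / (4 * R ^ 2) * (4 * R) = 4 * (η ^ 2 / (4 * R)) := by field_simp
    nlinarith
  have := Real.sqrt_le_sqrt hfin
  rwa [Real.sqrt_sq (norm_nonneg _), Real.sqrt_mul' _ (sq_nonneg _), Real.sqrt_sq (norm_nonneg _)] at this

lemma conj_ne {z w : ℂ} (h : 0 < z.im * w.im) : 0 < ‖z - (starRingEnd ℂ) w‖ := by
  refine norm_pos_iff.2 fun e => ?_
  have := congrArg Complex.im e
  simp at this
  have h2 : z.im = - w.im := by linarith
  rw [h2] at h
  nlinarith [sq_nonneg w.im]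

/-- For `f(z) = ∏_{n=1}^∞ (1 + z/2ⁿ)²`, the set `K(f)` is totally disconnected. -/
theorem Kf_totally_disconnected_infinite_product (f : ℂ → ℂ)
    (hf : ∀ z : ℂ, f z = ∏' n : ℕ, (1 + z / 2 ^ (n + 1)) ^ 2) :
    IsTotallyDisconnected (boundedOrbitSet f) := by
  replace hf : ∀ z, f z = FF z ^ 2 := fun z => (hf z).trans (FF_sq z)
  intro t htK ht p hp q hq
  obtain ⟨R₁, hR₁, η₁, hη₁, hb₁⟩ := orbit_bd hf (htK hp)
  obtain ⟨R₂, hR₂, η₂, hη₂, hb₂⟩ := orbit_bd hf (htK hq)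
  set R := max R₁ R₂
  set η := min η₁ η₂
  have hR : 0 < R := lt_max_of_lt_left hR₁
  have hη : 0 < η := lt_min hη₁ hη₂
  set l := √(1 - η ^ 2 / (4 * R ^ 2)) with hl
  have hl0 : 0 ≤ l := Real.sqrt_nonneg _
  have hl1 : l < 1 := by
    rw [hl, Real.sqrt_lt' one_pos]
    have : 0 < η ^ 2 / (4 * R ^ 2) := by positivity
    linarith
  have hsch : ∀ n : ℕ, 0 < (f^[n] p).im * (f^[n] q).im ∧
      0 < (FF (f^[n] p)).im * (FF (f^[n] q)).im ∧
      ‖f^[n] p - f^[n] q‖ * ‖FF (f^[n] p) - (starRingEnd ℂ) (FF (f^[n] q))‖ ≤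
        ‖f^[n] p - (starRingEnd ℂ) (f^[n] q)‖ * ‖FF (f^[n] p) - FF (f^[n] q)‖ := by
    intro n
    refine schwarz (s := f^[n] '' t) (ht.image _ ((f_cont hf).iterate n).continuousOn) ?_ ?_
      (Set.mem_image_of_mem _ hp) (Set.mem_image_of_mem _ hq)
    · rintro _ ⟨x, hx, rfl⟩; exact K_im hf (mem_K_iter (htK hx) n)
    · rintro _ ⟨x, hx, rfl⟩; exact K_FF hf (mem_K_iter (htK hx) n)
  let d : ℕ → ℝ := fun n => ‖f^[n] p - f^[n] q‖ / ‖f^[n] p - (starRingEnd ℂ) (f^[n] q)‖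
  have hd1 : ∀ n, d n ≤ 1 := fun n =>
    div_le_one_of_le₀ (norm_sub_le_conj (hsch n).1.le) (norm_nonneg _)
  have hstep : ∀ n, d n ≤ l * d (n + 1) := by
    intro n
    obtain ⟨s1, s2, s3⟩ := hsch n
    obtain ⟨s1', -, -⟩ := hsch (n + 1)
    have b1 := hb₁ (n + 1)
    have b2 := hb₂ (n + 1)
    simp only [d]
    rw [Function.iterate_succ_apply', Function.iterate_succ_apply'] at *
    rw [hf, hf] at *
    set a := FF (f^[n] p)
    set b := FF (f^[n] q)
    have hc := contr hR hη (b1.1.trans (le_max_left _ _)) (b2.1.trans (le_max_right _ _))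
      ((min_le_left _ _).trans b1.2) ((min_le_right _ _).trans b2.2) s2
    have p1 := conj_ne s1
    have p2 := conj_ne s1'
    have p3 := conj_ne s2
    have e1 : ‖a ^ 2 - b ^ 2‖ = ‖a - b‖ * ‖a + b‖ := by rw [← norm_mul]; ring_nf
    have e2 : ‖a ^ 2 - (starRingEnd ℂ) (b ^ 2)‖ =
        ‖a - (starRingEnd ℂ) b‖ * ‖a + (starRingEnd ℂ) b‖ := by
      rw [← norm_mul, map_pow]; ring_nf
    have p4 : 0 < ‖a + (starRingEnd ℂ) b‖ := by
      rw [e2] at p2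
      exact pos_of_mul_pos_right p2 p3.le
    calc _ ≤ ‖a - b‖ / ‖a - (starRingEnd ℂ) b‖ := by
          rw [div_le_div_iff₀ p1 p3]; linarith
      _ ≤ _ := by
          rw [e1, e2, ← mul_div_assoc, div_le_div_iff₀ p3 (mul_pos p3 p4)]
          have := mul_le_mul_of_nonneg_left hc
            (mul_nonneg (norm_nonneg (a - b)) (norm_nonneg (a - (starRingEnd ℂ) b)))
          linarith
  have hpow : ∀ n, d 0 ≤ l ^ n * d n := by
    intro n
    induction n with
    | zero => simp
    | succ n ih =>
      calc d 0 ≤ l ^ n * d n := ih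
        _ ≤ l ^ n * (l * d (n + 1)) := by gcongr; exact hstep n
        _ = _ := by ring
  have h0 : d 0 ≤ 0 := by
    refine ge_of_tendsto' (tendsto_pow_atTop_nhds_zero_of_lt_one hl0 hl1) fun n => ?_
    calc d 0 ≤ l ^ n * d n := hpow n
      _ ≤ l ^ n * 1 := by gcongr; exact hd1 n
      _ = _ := mul_one _
  have p1 := conj_ne (hsch 0).1
  have h2 : ‖f^[0] p - f^[0] q‖ ≤ 0 := by
    simp only [d] at h0
    by_contra hc
    push Not at hc
    exact absurd (div_pos hc p1) (not_lt.2 h0)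
  simpa [sub_eq_zero] using h2
end

section
/- Let f : ℂ → ℂ be Fatou's function f(z) = z + 1 + e^{-z}. Then K(f) is totally disconnected. -/
open Filter Topology

namespace FatouAux

/-- The normalised map. -/
noncomputable def g (u : ℂ) : ℂ := u + Complex.exp u

/-- The open strip. -/
def S : Set ℂ := {u | -Real.pi < u.im ∧ u.im < Real.pi}

lemma g_re (u : ℂ) : (g u).re = u.re + Real.exp u.re * Real.cos u.im := by
  simp [g, Complex.exp_re]

lemma g_im (u : ℂ) : (g u).im = u.im + Real.exp u.re * Real.sin u.im := by
  simp [g, Complex.exp_im]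

lemma isOpen_S : IsOpen S :=
  (isOpen_lt continuous_const Complex.continuous_im).inter
    (isOpen_lt Complex.continuous_im continuous_const)

lemma cont_g : Continuous g := by unfold g; fun_prop

lemma deriv_g (u : ℂ) : HasStrictDerivAt g (1 + Complex.exp u) u :=
  (hasStrictDerivAt_id u).add (Complex.hasStrictDerivAt_exp u)

lemma deriv_ne (u : ℂ) (hu : u ∈ S) : 1 + Complex.exp u ≠ 0 := by
  intro h
  have h1 : Complex.exp u = -1 := by linear_combination h
  have h2 : Complex.log (Complex.exp u) = u := Complex.log_exp hu.1 hu.2.le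
  rw [h1, Complex.log_neg_one] at h2
  have := hu.2
  rw [← h2] at this
  simp at this

/-- Injectivity in the upper half plane. -/
lemma inj_upper (a b : ℂ) (ha : 0 < a.im) (hb : 0 < b.im)
    (h : Complex.log a + a = Complex.log b + b) : a = b := by
  by_contra hab
  have hne : a - b ≠ 0 := sub_ne_zero.2 hab
  let p : ℝ → ℂ := fun s => b + s * (a - b)
  have hp : ∀ s ∈ Set.Icc (0:ℝ) 1, 0 < (p s).im := by
    intro s hs
    have : (p s).im = (1 - s) * b.im + s * a.im := by simp [p]; ring
    rw [this]
    rcases hs.1.eq_or_lt with h0 | h0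
    · rw [← h0]; simpa using hb
    · have := mul_pos h0 ha
      have := mul_nonneg (sub_nonneg.2 hs.2) hb.le
      linarith
  let F : ℝ → ℂ := fun s => (Complex.log (p s) + p s) / (a - b)
  have hF : ∀ s ∈ Set.Icc (0:ℝ) 1, HasDerivAt F (1 / p s + 1) s := by
    intro s hs
    have h1 : HasDerivAt p (a - b) s := by
      have := ((Complex.ofRealCLM.hasDerivAt (x := s)).mul_const (a - b)).const_add b
      simpa [p] using this
    have hsl : p s ∈ Complex.slitPlane := Or.inr (hp s hs).ne'
    have h2 := ((h1.clog_real hsl).add h1).div_const (a - b)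
    have e : ((a - b) / p s + (a - b)) / (a - b) = 1 / p s + 1 := by
      rw [add_div, div_self hne, div_right_comm, div_self hne]
    rw [e] at h2
    exact h2
  have hG : ∀ s ∈ Set.Icc (0:ℝ) 1, HasDerivAt (fun s => (F s).im) (1 / p s + 1).im s := by
    intro s hs
    exact Complex.imCLM.hasFDerivAt.comp_hasDerivAt s (hF s hs)
  obtain ⟨c, hc, hc'⟩ := exists_hasDerivAt_eq_slope (fun s => (F s).im) (fun s => (1 / p s + 1).im)
    zero_lt_one (fun s hs => (hG s hs).continuousAt.continuousWithinAt)
    (fun s hs => hG s (Set.Ioo_subset_Icc_self hs))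
  have e0 : F 0 = F 1 := by simp [F, p, h]
  have hpc := hp c (Set.Ioo_subset_Icc_self hc)
  have hn : 0 < Complex.normSq (p c) := by
    apply Complex.normSq_pos.2
    intro h0; rw [h0] at hpc; simp at hpc
  simp only [e0, sub_self, zero_div] at hc'
  simp [Complex.inv_im] at hc'
  rcases hc' with h | h
  · exact hpc.ne' h
  · rw [h] at hpc; simp at hpc

lemma im_pos (u : ℂ) (hu : u ∈ S) (h : 0 < u.im) : 0 < (g u).im := by
  rw [g_im]
  have := Real.sin_pos_of_pos_of_lt_pi h hu.2
  positivity

lemma im_neg (u : ℂ) (hu : u ∈ S) (h : u.im < 0) : (g u).im < 0 := by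
  rw [g_im]
  have := Real.sin_neg_of_neg_of_neg_pi_lt h hu.1
  have := mul_neg_of_pos_of_neg (Real.exp_pos u.re) this
  linarith

lemma im_zero (u : ℂ) (h : u.im = 0) : (g u).im = 0 := by
  rw [g_im, h]; simp

lemma inj_pos (u v : ℂ) (hu : u ∈ S) (hv : v ∈ S) (h1 : 0 < u.im) (h2 : 0 < v.im)
    (h : g u = g v) : u = v := by
  have lu : Complex.log (Complex.exp u) = u := Complex.log_exp hu.1 hu.2.le
  have lv : Complex.log (Complex.exp v) = v := Complex.log_exp hv.1 hv.2.le
  have key : Complex.exp u = Complex.exp v := by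
    apply inj_upper
    · rw [Complex.exp_im]
      exact mul_pos (Real.exp_pos _) (Real.sin_pos_of_pos_of_lt_pi h1 hu.2)
    · rw [Complex.exp_im]
      exact mul_pos (Real.exp_pos _) (Real.sin_pos_of_pos_of_lt_pi h2 hv.2)
    · rw [lu, lv]; exact h
  rw [← lu, ← lv, key]

lemma g_conj (u : ℂ) : g ((starRingEnd ℂ) u) = (starRingEnd ℂ) (g u) := by
  simp [g, Complex.exp_conj]

lemma inj_S : Set.InjOn g S := by
  intro u hu v hv h
  have him : (g u).im = (g v).im := by rw [h]
  rcases lt_trichotomy u.im 0 with h1 | h1 | h1 <;> rcases lt_trichotomy v.im 0 with h2 | h2 | h2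
  · apply (starRingEnd ℂ).injective
    apply inj_pos
    · constructor <;> simp <;> linarith [hu.1, hu.2]
    · constructor <;> simp <;> linarith [hv.1, hv.2]
    · simpa using h1
    · simpa using h2
    · rw [g_conj, g_conj, h]
  · linarith [im_neg u hu h1, im_zero v h2]
  · linarith [im_neg u hu h1, im_pos v hv h2]
  · linarith [im_neg v hv h2, im_zero u h1]
  · have hre : (g u).re = (g v).re := by rw [h]
    rw [g_re, g_re, h1, h2] at hre
    simp at hre
    apply Complex.ext _ (h1.trans h2.symm)
    rcases lt_trichotomy u.re v.re with h3 | h3 | h3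
    · linarith [Real.exp_lt_exp.2 h3]
    · exact h3
    · linarith [Real.exp_lt_exp.2 h3]
  · linarith [im_zero u h1, im_pos v hv h2]
  · linarith [im_neg v hv h2, im_pos u hu h1]
  · linarith [im_zero v h2, im_pos u hu h1]
  · exact inj_pos u v hu hv h1 h2 h

/-- The target half plane. -/
def H : Set ℂ := {w | 1 ≤ w.re}

lemma convex_H : Convex ℝ H := convex_halfSpace_re_ge 1

lemma isOpen_image : IsOpen (g '' S) := by
  rw [isOpen_iff_mem_nhds]
  rintro _ ⟨u, hu, rfl⟩
  rw [← (deriv_g u).map_nhds_eq (deriv_ne u hu)]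
  exact image_mem_map (isOpen_S.mem_nhds hu)

lemma bound (u : ℂ) (hu : u ∈ S) (M : ℝ) (hM : ‖g u‖ ≤ M) : ‖u‖ ≤ 2 * M + 20 := by
  have hpi := Real.pi_lt_four
  have hpi0 := Real.pi_pos
  have him : |u.im| ≤ 4 := abs_le.2 ⟨by linarith [hu.1], by linarith [hu.2]⟩
  have hnu := Complex.norm_le_abs_re_add_abs_im u
  have hM0 : 0 ≤ M := (norm_nonneg _).trans hM
  have hre : |u.re| ≤ M + 10 := by
    apply abs_le.2
    constructor
    · by_contra hlt
      push Not at hlt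
      have h1 : -M ≤ (g u).re := by
        have := (abs_le.1 (Complex.abs_re_le_norm (g u))).1; linarith
      rw [g_re] at h1
      have h2 : Real.exp u.re ≤ 1 := Real.exp_le_one_iff.2 (by linarith)
      have h3 : Real.exp u.re * Real.cos u.im ≤ Real.exp u.re * 1 :=
        mul_le_mul_of_nonneg_left (Real.cos_le_one _) (Real.exp_pos _).le
      linarith
    · by_contra hlt
      push Not at hlt
      have h0 : 0 ≤ u.re := by linarith
      have h1 : ‖Complex.exp u‖ ≤ ‖g u‖ + ‖u‖ := by
        have : Complex.exp u = g u - u := by simp [g]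
        rw [this]; exact norm_sub_le _ _
      rw [Complex.norm_exp] at h1
      have h2 := Real.quadratic_le_exp_of_nonneg h0
      rw [abs_of_nonneg h0] at hnu
      nlinarith
  linarith

lemma surj : H ⊆ g '' S := by
  apply convex_H.isPreconnected.subset_of_closure_inter_subset isOpen_image
  · refine ⟨g 0, ?_, ⟨0, ?_, rfl⟩⟩
    · simp [H, g]
    · simp [S, Real.pi_pos]
  · rintro w ⟨hw, hwH⟩
    obtain ⟨x, hx, hlim⟩ := mem_closure_iff_seq_limit.1 hw
    choose u hu hux using hx
    obtain ⟨M, hM⟩ := (Metric.isBounded_range_of_tendsto x hlim).exists_norm_le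
    have hb : ∀ n, u n ∈ Metric.closedBall (0:ℂ) (2 * M + 20) := by
      intro n
      rw [mem_closedBall_zero_iff]
      exact bound _ (hu n) M (by rw [hux]; exact hM _ ⟨n, rfl⟩)
    obtain ⟨a, -, φ, hφ, hlim2⟩ := (isCompact_closedBall (0:ℂ) (2 * M + 20)).tendsto_subseq hb
    have h1 : Tendsto (fun n => g (u (φ n))) atTop (𝓝 (g a)) := (cont_g.tendsto a).comp hlim2
    have h2 : Tendsto (fun n => g (u (φ n))) atTop (𝓝 w) := by
      simp only [hux]; exact hlim.comp hφ.tendsto_atTop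
    have hga : g a = w := tendsto_nhds_unique h1 h2
    have him := (Complex.continuous_im.tendsto a).comp hlim2
    have i1 : a.im ≤ Real.pi := le_of_tendsto' him fun n => (hu (φ n)).2.le
    have i2 : -Real.pi ≤ a.im := ge_of_tendsto' him fun n => (hu (φ n)).1.le
    have hre : 1 ≤ (g a).re := by rw [hga]; exact hwH
    rw [g_re] at hre
    have hexp := Real.add_one_le_exp a.re
    refine ⟨a, ⟨lt_of_le_of_ne i2 ?_, lt_of_le_of_ne i1 ?_⟩, hga⟩
    · intro h; rw [← h] at hre; simp at hre; linarith
    · intro h; rw [h] at hre; simp at hre; linarith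

lemma two_le (u : ℂ) (h : 1 ≤ (g u).re) : 2 ≤ ‖1 + Complex.exp u‖ := by
  rw [g_re] at h
  have h1 : ‖1 + Complex.exp u‖ ^ 2 =
      1 + 2 * (Real.exp u.re * Real.cos u.im) + Real.exp (2 * u.re) := by
    rw [← Complex.normSq_eq_norm_sq, Complex.normSq_apply]
    simp only [Complex.add_re, Complex.add_im, Complex.one_re, Complex.one_im,
      Complex.exp_re, Complex.exp_im]
    rw [two_mul u.re, Real.exp_add]
    linear_combination (Real.exp u.re)^2 * Real.sin_sq_add_cos_sq u.im
  have h2 := Real.add_one_le_exp (2 * u.re)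
  nlinarith [norm_nonneg (1 + Complex.exp u)]

lemma expand (u v : ℂ) (hu : u ∈ S) (hv : v ∈ S) (h1 : 1 ≤ (g u).re) (h2 : 1 ≤ (g v).re) :
    ‖u - v‖ ≤ 1 / 2 * ‖g u - g v‖ := by
  let φ := Function.invFunOn g S
  have hl : ∀ x ∈ S, φ (g x) = x := fun x hx => inj_S.leftInvOn_invFunOn hx
  have hd : ∀ w ∈ H, HasDerivWithinAt φ (1 + Complex.exp (φ w))⁻¹ H w := by
    intro w hw
    obtain ⟨x, hx, rfl⟩ := surj hw
    rw [hl x hx]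
    have := (deriv_g x).to_local_left_inverse (deriv_ne x hx) (g := φ)
      (Filter.mem_of_superset (isOpen_S.mem_nhds hx) hl)
    exact this.hasDerivAt.hasDerivWithinAt
  have hb : ∀ w ∈ H, ‖(1 + Complex.exp (φ w))⁻¹‖ ≤ 1 / 2 := by
    intro w hw
    obtain ⟨x, hx, rfl⟩ := surj hw
    rw [hl x hx, norm_inv, one_div]
    exact inv_anti₀ two_pos (two_le x hw)
  have := convex_H.norm_image_sub_le_of_norm_hasDerivWithin_le hd hb
    (show g v ∈ H from h2) (show g u ∈ H from h1)
  rwa [hl u hu, hl v hv] at this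

/-- Expansion for the Fatou function. -/
lemma expand_f (f : ℂ → ℂ) (hf : ∀ z : ℂ, f z = z + 1 + Complex.exp (-z)) (k : ℤ) (z w : ℂ)
    (hz1 : 2 * Real.pi * k < z.im) (hz2 : z.im < 2 * Real.pi * (k + 1))
    (hw1 : 2 * Real.pi * k < w.im) (hw2 : w.im < 2 * Real.pi * (k + 1))
    (hz : (f z).re ≤ 0) (hw : (f w).re ≤ 0) : ‖z - w‖ ≤ 1 / 2 * ‖f z - f w‖ := by
  set c : ℂ := ((2 * k + 1) * Real.pi : ℝ) * Complex.I with hc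
  have hcre : c.re = 0 := by simp [hc]
  have hcim : c.im = (2 * k + 1) * Real.pi := by simp [hc]
  have hexp : Complex.exp (-c) = -1 := by
    have : -c = -(Real.pi * Complex.I) - k * (2 * Real.pi * Complex.I) := by
      rw [hc]; push_cast; ring
    rw [this, Complex.exp_sub, Complex.exp_int_mul_two_pi_mul_I, Complex.exp_neg,
      Complex.exp_pi_mul_I]
    norm_num
  have hg : ∀ x, g (c - x) = c + 1 - f x := by
    intro x
    have : Complex.exp (-x) = Complex.exp (-c) * Complex.exp (c - x) := by
      rw [← Complex.exp_add]; congr 1; ring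
    rw [hf, this, hexp, g]; ring
  have := expand (c - z) (c - w) ⟨by simp [hcim]; linarith, by simp [hcim]; linarith⟩
    ⟨by simp [hcim]; linarith, by simp [hcim]; linarith⟩
    (by rw [hg]; simp [hcre]; exact hz) (by rw [hg]; simp [hcre]; exact hw)
  rw [hg, hg] at this
  have e1 : c - z - (c - w) = -(z - w) := by ring
  have e2 : c + 1 - f z - (c + 1 - f w) = -(f z - f w) := by ring
  rwa [e1, e2, norm_neg, norm_neg] at this

lemma bdd (f : ℂ → ℂ) (z : ℂ) (hz : z ∈ boundedOrbitSet f) :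
    Bornology.IsBounded (Set.range fun n : ℕ => f^[n] z) := hz

lemma map_K (f : ℂ → ℂ) (z : ℂ) (hz : z ∈ boundedOrbitSet f) : f z ∈ boundedOrbitSet f := by
  refine (bdd f z hz).subset ?_
  rintro _ ⟨n, rfl⟩
  exact ⟨n + 1, Function.iterate_succ_apply f n z⟩

lemma f_re (f : ℂ → ℂ) (hf : ∀ z : ℂ, f z = z + 1 + Complex.exp (-z)) (z : ℂ) :
    (f z).re = z.re + 1 + Real.exp (-z.re) * Real.cos z.im := by
  rw [hf]; simp [Complex.exp_re]

lemma re_K (f : ℂ → ℂ) (hf : ∀ z : ℂ, f z = z + 1 + Complex.exp (-z)) (z : ℂ)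
    (hz : z ∈ boundedOrbitSet f) : z.re ≤ 0 := by
  by_contra hpos
  push Not at hpos
  have hδ : 0 < 1 - Real.exp (-z.re) := by
    have : Real.exp (-z.re) < 1 := Real.exp_lt_one_iff.2 (by linarith)
    linarith
  have key : ∀ n : ℕ, z.re + n * (1 - Real.exp (-z.re)) ≤ (f^[n] z).re := by
    intro n
    induction n with
    | zero => simp
    | succ n ih =>
      rw [Function.iterate_succ_apply', f_re f hf]
      set y := f^[n] z
      have h1 : z.re ≤ y.re := by
        have : 0 ≤ (n:ℝ) * (1 - Real.exp (-z.re)) := by positivity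
        linarith
      have h2 : Real.exp (-y.re) ≤ Real.exp (-z.re) := Real.exp_le_exp.2 (by linarith)
      have h3 : Real.exp (-y.re) * (-1) ≤ Real.exp (-y.re) * Real.cos y.im :=
        mul_le_mul_of_nonneg_left (Real.neg_one_le_cos _) (Real.exp_pos _).le
      push_cast
      linarith
  obtain ⟨M, hM⟩ := (bdd f z hz).exists_norm_le
  obtain ⟨n, hn⟩ := exists_nat_gt (M / (1 - Real.exp (-z.re)))
  rw [div_lt_iff₀ hδ] at hn
  have h1 := hM _ ⟨n, rfl⟩
  have h2 := Complex.re_le_norm (f^[n] z)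
  have h3 := key n
  simp only at h1
  linarith

lemma im_K (f : ℂ → ℂ) (hf : ∀ z : ℂ, f z = z + 1 + Complex.exp (-z)) (z : ℂ)
    (hz : z ∈ boundedOrbitSet f) (k : ℤ) : z.im ≠ 2 * Real.pi * k := by
  intro h
  have h1 := re_K f hf _ (map_K f z hz)
  have h2 : Real.cos z.im = 1 := by
    rw [h, mul_comm]; exact Real.cos_int_mul_two_pi k
  rw [f_re f hf, h2] at h1
  have := Real.add_one_le_exp (-z.re)
  linarith

lemma step (f : ℂ → ℂ) (hf : ∀ z : ℂ, f z = z + 1 + Complex.exp (-z)) (t : Set ℂ)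
    (ht : t ⊆ boundedOrbitSet f) (hc : IsPreconnected t) (z w : ℂ) (hz : z ∈ t) (hw : w ∈ t) :
    ‖z - w‖ ≤ 1 / 2 * ‖f z - f w‖ := by
  have hpi := Real.two_pi_pos
  have hI : IsPreconnected (Complex.im '' t) := hc.image _ Complex.continuous_im.continuousOn
  have ho := hI.ordConnected
  have hno : ∀ k : ℤ, 2 * Real.pi * k ∉ Complex.im '' t := by
    rintro k ⟨x, hx, hxk⟩
    exact im_K f hf x (ht hx) k hxk
  set k := ⌊z.im / (2 * Real.pi)⌋ with hk
  have k1 : 2 * Real.pi * k ≤ z.im := by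
    have := Int.floor_le (z.im / (2 * Real.pi))
    rw [le_div_iff₀ hpi] at this; linarith
  have k2 : z.im < 2 * Real.pi * (k + 1) := by
    have := Int.lt_floor_add_one (z.im / (2 * Real.pi))
    rw [div_lt_iff₀ hpi] at this; linarith
  have k1' := lt_of_le_of_ne k1 (im_K f hf z (ht hz) k).symm
  have w1 : 2 * Real.pi * k < w.im := by
    by_contra hlt
    push Not at hlt
    exact hno k (ho.out ⟨w, hw, rfl⟩ ⟨z, hz, rfl⟩ ⟨hlt, k1⟩)
  have w2 : w.im < 2 * Real.pi * (k + 1) := by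
    by_contra hlt
    push Not at hlt
    refine hno (k + 1) (ho.out ⟨z, hz, rfl⟩ ⟨w, hw, rfl⟩ ?_)
    push_cast
    exact ⟨k2.le, hlt⟩
  exact expand_f f hf k z w k1' k2 w1 w2 (re_K f hf _ (map_K f z (ht hz)))
    (re_K f hf _ (map_K f w (ht hw)))

lemma steps (f : ℂ → ℂ) (hf : ∀ z : ℂ, f z = z + 1 + Complex.exp (-z)) (n : ℕ) :
    ∀ (t : Set ℂ), t ⊆ boundedOrbitSet f → IsPreconnected t → ∀ z ∈ t, ∀ w ∈ t,
    ‖z - w‖ ≤ (1 / 2) ^ n * ‖f^[n] z - f^[n] w‖ := by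
  have hcont : Continuous f := by
    have : f = fun z => z + 1 + Complex.exp (-z) := funext hf
    rw [this]; fun_prop
  induction n with
  | zero => intro t _ _ z _ w _; simp
  | succ n ih =>
    intro t ht hc z hz w hw
    have h1 := step f hf t ht hc z w hz hw
    have h2 := ih (f '' t) (by rintro _ ⟨x, hx, rfl⟩; exact map_K f x (ht hx))
      (hc.image _ hcont.continuousOn) (f z) ⟨z, hz, rfl⟩ (f w) ⟨w, hw, rfl⟩
    rw [Function.iterate_succ_apply, Function.iterate_succ_apply, pow_succ]
    linarith

end FatouAux

/-- For Fatou's function `f(z) = z + 1 + e^{-z}`, the set `K(f)` is totally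
disconnected. -/
theorem Kf_totally_disconnected_fatou_function (f : ℂ → ℂ)
    (hf : ∀ z : ℂ, f z = z + 1 + Complex.exp (-z)) :
    IsTotallyDisconnected (boundedOrbitSet f) := by
  intro t ht hc z hz w hw
  obtain ⟨M, hM⟩ := (FatouAux.bdd f z (ht hz)).exists_norm_le
  obtain ⟨N, hN⟩ := (FatouAux.bdd f w (ht hw)).exists_norm_le
  have key : ∀ n : ℕ, ‖z - w‖ ≤ (1 / 2 : ℝ) ^ n * (M + N) := by
    intro n
    refine (FatouAux.steps f hf n t ht hc z hz w hw).trans ?_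
    refine mul_le_mul_of_nonneg_left ?_ (by positivity)
    exact (norm_sub_le _ _).trans (add_le_add (hM _ ⟨n, rfl⟩) (hN _ ⟨n, rfl⟩))
  have hlim : Tendsto (fun n : ℕ => (1 / 2 : ℝ) ^ n * (M + N)) atTop (𝓝 (0 * (M + N))) :=
    (tendsto_pow_atTop_nhds_zero_of_lt_one (by norm_num) (by norm_num)).mul_const _
  have h0 : ‖z - w‖ ≤ 0 := by
    have := ge_of_tendsto' hlim key
    simpa using this
  exact sub_eq_zero.1 (norm_le_zero_iff.1 h0)
end
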